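/- Fix s ∈ [0,1] and let n range over positive integers. For each n, among the Ap₁-orbit classes in ID₀(n) (those orbits of D(n) containing a quadruple with a nonpositive entry), the proportion of classes whose representative q satisfies MC(q) ≤ s·n tends to s as n → ∞. In other words, the heights MC(q)/n of the classes in ID₀(n) equidistribute uniformly on the interval [0,1] as n → ∞. -/

import Mathlib

open Matrix

/-- The Apollonian generators. -/
def S₁ : Matrix (Fin 4) (Fin 4) ℤ := !![-1,2,2,2; 0,1,0,0; 0,0,1,0; 0,0,0,1]
def S₂ : Matrix (Fin 4) (Fin 4) ℤ := !![1,0,0,0; 2,-1,2,2; 0,0,1,0; 0,0,0,1]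
def S₃ : Matrix (Fin 4) (Fin 4) ℤ := !![1,0,0,0; 0,1,0,0; 2,2,-1,2; 0,0,0,1]
def S₄ : Matrix (Fin 4) (Fin 4) ℤ := !![1,0,0,0; 0,1,0,0; 0,0,1,0; 2,2,2,-1]

/-- The permutation matrix swapping coordinates 2 and 3. -/
def P₂₃ : Matrix (Fin 4) (Fin 4) ℤ := !![1,0,0,0; 0,0,1,0; 0,1,0,0; 0,0,0,1]

/-- The permutation matrix swapping coordinates 2 and 4. -/
def P₂₄ : Matrix (Fin 4) (Fin 4) ℤ := !![1,0,0,0; 0,0,0,1; 0,0,1,0; 0,1,0,0]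

/-- The group `Ap₁` generated by `P₂₃`, `P₂₄`, `S₄`; since the generators are
involutions, it consists exactly of all finite products of the generators. -/
def Ap₁ : Submonoid (Matrix (Fin 4) (Fin 4) ℤ) := Submonoid.closure {P₂₃, P₂₄, S₄}

/-- The extended Apollonian group, generated by `S₁, S₂, S₃, S₄` and all `4 × 4`
permutation matrices; the generating set is closed under inverses, so the group
consists of all finite products of generators. -/
def Apfull : Submonoid (Matrix (Fin 4) (Fin 4) ℤ) :=
  Submonoid.closure ({S₁, S₂, S₃, S₄} ∪ {M | ∃ σ : Equiv.Perm (Fin 4), M = σ.permMatrix ℤ})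

/-- The set of primitive integral Descartes quadruples `(n, a, b, c)` with
`n + a ≥ 0` and `n + b ≥ 0`. -/
def DSet (n : ℤ) : Set (Fin 4 → ℤ) :=
  {q | q 0 = n ∧
    Int.gcd (Int.gcd (Int.gcd (q 0) (q 1) : ℤ) (q 2) : ℤ) (q 3) = 1 ∧
    (q 0 + q 1 + q 2 + q 3) ^ 2 = 2 * ((q 0) ^ 2 + (q 1) ^ 2 + (q 2) ^ 2 + (q 3) ^ 2) ∧
    0 ≤ q 0 + q 1 ∧ 0 ≤ q 0 + q 2}

/-- The set of `Ap₁`-orbits of elements of `D(n)`. -/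
def ID (n : ℤ) : Set (Set (Fin 4 → ℤ)) :=
  {O | ∃ q ∈ DSet n, O = {q' | ∃ M ∈ Ap₁, q' = M.mulVec q}}

/-- The orbits containing a quadruple with a nonpositive entry. -/
def ID₀ (n : ℤ) : Set (Set (Fin 4 → ℤ)) :=
  {O ∈ ID n | ∃ q ∈ O, ∃ i : Fin 4, q i ≤ 0}

/-- The negative of the minimal curvature in the packing generated by `q`:
the supremum of `−(Mq)₁` over `M` in the extended Apollonian group. -/
noncomputable def MC (q : Fin 4 → ℤ) : ℝ :=
  sSup {x : ℝ | ∃ M ∈ Apfull, x = -(((M.mulVec q) 0 : ℤ) : ℝ)}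

/-- The real function `m ↦ m ^ (-ε)` as a monoid homomorphism on `ℕ`. -/
noncomputable def rpowNegHom (ε : ℝ) : ℕ →* ℝ where
  toFun m := (m : ℝ) ^ (-ε)
  map_one' := by simp
  map_mul' a b := by
    push_cast
    exact Real.mul_rpow (Nat.cast_nonneg a) (Nat.cast_nonneg b)

lemma prod_primeFactors_one_sub_rpow_inv_le {ε : ℝ} (hε : 0 < ε) :
    ∃ C : ℝ, 0 < C ∧ ∀ N : ℕ, N ≠ 0 →
      ∏ p ∈ N.primeFactors, (1 - (p : ℝ) ^ (-ε))⁻¹ ≤ C * (N : ℝ) ^ ε := by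
  obtain ⟨P, hP⟩ : ∃ P : ℕ, (2 : ℝ) ^ (1 / ε) ≤ P := exists_nat_ge _
  have h2 : (2 : ℝ) ^ (-ε) < 1 := Real.rpow_lt_one_of_one_lt_of_neg (by norm_num) (by linarith)
  set K : ℝ := (1 - (2 : ℝ) ^ (-ε))⁻¹ with hK
  have hK1 : 1 ≤ K := by
    rw [hK, one_le_inv₀ (by linarith)]
    have : 0 < (2 : ℝ) ^ (-ε) := by positivity
    linarith
  refine ⟨K ^ P, by positivity, fun N hN => ?_⟩
  have hfac : ∀ p ∈ N.primeFactors,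
      (1 - (p : ℝ) ^ (-ε))⁻¹ ≤ (if p < P then K else 1) * (p : ℝ) ^ ε := by
    intro p hp
    have hp2 : (2 : ℝ) ≤ p := by exact_mod_cast (Nat.prime_of_mem_primeFactors hp).two_le
    have hp1 : 1 ≤ (p : ℝ) ^ ε := Real.one_le_rpow (by linarith) hε.le
    split_ifs with h
    · have h3 : (p : ℝ) ^ (-ε) ≤ 2 ^ (-ε) :=
        Real.rpow_le_rpow_of_nonpos (by norm_num) hp2 (by linarith)
      have : (1 - (p : ℝ) ^ (-ε))⁻¹ ≤ K := inv_anti₀ (by linarith) (by linarith)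
      nlinarith
    · have h4 : (2 : ℝ) ≤ (p : ℝ) ^ ε := by
        have : (2 : ℝ) ^ (1 / ε) ≤ p := hP.trans (by exact_mod_cast not_lt.mp h)
        calc (2 : ℝ) = ((2 : ℝ) ^ (1 / ε)) ^ ε := by
              rw [← Real.rpow_mul (by norm_num)]; field_simp; simp
          _ ≤ _ := Real.rpow_le_rpow (by positivity) this hε.le
      rw [Real.rpow_neg (by positivity), one_mul]
      set x := (p : ℝ) ^ ε
      have hx : 0 < x := by linarith
      rw [inv_le_comm₀ (by rw [sub_pos]; exact inv_lt_one_of_one_lt₀ (by linarith)) hx]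
      have : x⁻¹ ≤ 2⁻¹ := inv_anti₀ (by norm_num) h4
      linarith
  have hpos : ∀ p ∈ N.primeFactors, 0 ≤ (1 - (p : ℝ) ^ (-ε))⁻¹ := by
    intro p hp
    have hp2 : (1 : ℝ) < p := by exact_mod_cast (Nat.prime_of_mem_primeFactors hp).one_lt
    have : (p : ℝ) ^ (-ε) < 1 := Real.rpow_lt_one_of_one_lt_of_neg hp2 (by linarith)
    exact inv_nonneg.mpr (by linarith)
  refine (Finset.prod_le_prod hpos hfac).trans ?_
  rw [Finset.prod_mul_distrib, Real.finsetProd_rpow _ _ (fun _ _ => by positivity)]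
  have hA : ∏ p ∈ N.primeFactors, (if p < P then K else 1) ≤ K ^ P := by
    rw [← Finset.prod_filter, Finset.prod_const]
    refine pow_le_pow_right₀ hK1 ?_
    calc _ ≤ (Finset.range P).card := Finset.card_le_card (fun p hp => by simp_all)
      _ = P := Finset.card_range P
  have hB : (∏ p ∈ N.primeFactors, (p : ℝ)) ≤ N := by
    rw [← Nat.cast_prod]
    exact_mod_cast Nat.le_of_dvd (Nat.pos_of_ne_zero hN) (Nat.prod_primeFactors_dvd N)
  refine mul_le_mul hA (Real.rpow_le_rpow (Finset.prod_nonneg fun _ _ => by positivity) hB hε.le)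
    (Real.rpow_nonneg (Finset.prod_nonneg fun _ _ => by positivity) _) (by positivity)

/-- There are few integers up to `X` composed of the primes dividing a given `N`. -/
lemma card_primeFactors_subset_le {ε : ℝ} (hε : 0 < ε) :
    ∃ C : ℝ, 0 < C ∧ ∀ N : ℕ, N ≠ 0 → ∀ X : ℕ,
      (((Finset.Ioc 0 X).filter fun m => m.primeFactors ⊆ N.primeFactors).card : ℝ)
        ≤ C * (N : ℝ) ^ ε * (X : ℝ) ^ ε := by
  obtain ⟨C, hC, h⟩ := prod_primeFactors_one_sub_rpow_inv_le hε
  refine ⟨C, hC, fun N hN X => ?_⟩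
  rcases Nat.eq_zero_or_pos X with rfl | hX
  · simp [Real.zero_rpow hε.ne']
  have hlt : ∀ {p : ℕ}, p.Prime → ‖rpowNegHom ε p‖ < 1 := by
    intro p hp
    have hp2 : (1 : ℝ) < p := by exact_mod_cast hp.one_lt
    have : (p : ℝ) ^ (-ε) < 1 := Real.rpow_lt_one_of_one_lt_of_neg hp2 (by linarith)
    simpa [rpowNegHom, abs_of_nonneg (Real.rpow_nonneg (Nat.cast_nonneg p) _)] using this
  have hs := (EulerProduct.summable_and_hasSum_factoredNumbers_prod_filter_prime_geometric
    hlt N.primeFactors).2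
  rw [Finset.filter_true_of_mem (fun p hp => Nat.prime_of_mem_primeFactors hp)] at hs
  set T := (Finset.Ioc 0 X).filter fun m => m.primeFactors ⊆ N.primeFactors with hT
  have hmem : ∀ m ∈ T, m ∈ Nat.factoredNumbers N.primeFactors := by
    intro m hm
    rw [hT, Finset.mem_filter, Finset.mem_Ioc] at hm
    exact Nat.mem_factoredNumbers_iff_primeFactors_subset.mpr ⟨by omega, hm.2⟩
  have hle : ∑ m ∈ T, (m : ℝ) ^ (-ε) ≤ C * (N : ℝ) ^ ε := by
    refine le_trans ?_ (h N hN)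
    classical
    rw [← Finset.sum_subtype_of_mem _ hmem]
    exact sum_le_hasSum _ (fun m _ => Real.rpow_nonneg (Nat.cast_nonneg _) _) hs
  have hX0 : (0 : ℝ) < X := by exact_mod_cast hX
  have hcard : (T.card : ℝ) * (X : ℝ) ^ (-ε) ≤ ∑ m ∈ T, (m : ℝ) ^ (-ε) := by
    rw [← nsmul_eq_mul]
    refine Finset.card_nsmul_le_sum _ _ _ fun m hm => ?_
    rw [hT, Finset.mem_filter, Finset.mem_Ioc] at hm
    exact Real.rpow_le_rpow_of_nonpos (by exact_mod_cast hm.1.1) (by exact_mod_cast hm.1.2)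
      (by linarith)
  have := hcard.trans hle
  rwa [Real.rpow_neg hX0.le, ← div_eq_mul_inv, div_le_iff₀ (by positivity)] at this

lemma card_divisors_le_rpow {ε : ℝ} (hε : 0 < ε) :
    ∃ C : ℝ, 0 < C ∧ ∀ N : ℕ, N ≠ 0 → (N.divisors.card : ℝ) ≤ C * (N : ℝ) ^ ε := by
  obtain ⟨C, hC, h⟩ := card_primeFactors_subset_le (half_pos hε)
  refine ⟨C, hC, fun N hN => ?_⟩
  have hN0 : (0 : ℝ) < N := by exact_mod_cast Nat.pos_of_ne_zero hN
  calc (N.divisors.card : ℝ)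
      ≤ ((Finset.Ioc 0 N).filter fun m => m.primeFactors ⊆ N.primeFactors).card := by
        gcongr
        intro d hd
        have hdN := Nat.dvd_of_mem_divisors hd
        rw [Finset.mem_filter, Finset.mem_Ioc]
        exact ⟨⟨Nat.pos_of_mem_divisors hd, Nat.divisor_le hd⟩, Nat.primeFactors_mono hdN hN⟩
    _ ≤ C * (N : ℝ) ^ (ε / 2) * (N : ℝ) ^ (ε / 2) := h N hN N
    _ = C * (N : ℝ) ^ ε := by rw [mul_assoc, ← Real.rpow_add hN0, add_halves]

/-- `A x² + 2 H x y + B y²` with `A B = H² + n²` is an integral primitive form. -/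
def IsPrimRoot (n A H : ℕ) : Prop :=
  A ∣ H ^ 2 + n ^ 2 ∧ ∀ p : ℕ, p.Prime → p ∣ A → p ∣ 2 * H → ¬ p * A ∣ H ^ 2 + n ^ 2

open Classical in
/-- The number of residues `H` modulo `A` satisfying `IsPrimRoot n A H`. -/
noncomputable def primRootCount (n A : ℕ) : ℕ :=
  ((Finset.range A).filter fun H => IsPrimRoot n A H).card

lemma isPrimRoot_add_mul_iff (n A H t : ℕ) : IsPrimRoot n A (H + t * A) ↔ IsPrimRoot n A H := by
  have key : (H + t * A) ^ 2 + n ^ 2 = (H ^ 2 + n ^ 2) + (2 * H * (t * A) + (t * A) ^ 2) := by ring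
  have hdvd : A ∣ (H + t * A) ^ 2 + n ^ 2 ↔ A ∣ H ^ 2 + n ^ 2 := by
    rw [key]
    exact Nat.dvd_add_left ⟨2 * H * t + t ^ 2 * A, by ring⟩
  have h2 : ∀ p, p ∣ A → (p ∣ 2 * (H + t * A) ↔ p ∣ 2 * H) := by
    intro p hp
    rw [mul_add]
    exact Nat.dvd_add_left (Dvd.dvd.mul_left (Dvd.dvd.mul_left hp _) _)
  have h3 : ∀ p, p ∣ A → p ∣ 2 * H →
      (p * A ∣ (H + t * A) ^ 2 + n ^ 2 ↔ p * A ∣ H ^ 2 + n ^ 2) := by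
    intro p hp hH
    rw [key]
    refine Nat.dvd_add_left (Nat.dvd_add ?_ ?_)
    · exact mul_dvd_mul hH (Dvd.intro_left t rfl)
    · rw [pow_two]
      exact mul_dvd_mul (Dvd.dvd.mul_left hp _) (Dvd.intro_left t rfl)
  refine and_congr hdvd (forall_congr' fun p => imp_congr_right fun _ => ?_)
  constructor
  · exact fun h hp hH => by rw [← h3 p hp hH]; exact h hp ((h2 p hp).mpr hH)
  · exact fun h hp hH => by
      rw [h3 p hp ((h2 p hp).mp hH)]; exact h hp ((h2 p hp).mp hH)

lemma isPrimRoot_mod_iff (n A H : ℕ) : IsPrimRoot n A (H % A) ↔ IsPrimRoot n A H := by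
  conv_rhs => rw [← Nat.mod_add_div H A, mul_comm A]
  exact (isPrimRoot_add_mul_iff n A (H % A) (H / A)).symm

lemma isPrimRoot_mul_iff {n a b H : ℕ} (hab : a.Coprime b) :
    IsPrimRoot n (a * b) H ↔ IsPrimRoot n a H ∧ IsPrimRoot n b H := by
  have aux : ∀ {a b : ℕ}, a.Coprime b → ∀ p : ℕ, p ∣ a → b ∣ H ^ 2 + n ^ 2 →
      (p * (a * b) ∣ H ^ 2 + n ^ 2 ↔ p * a ∣ H ^ 2 + n ^ 2) := by
    intro a b hab p hp hb
    refine ⟨fun h => dvd_trans ⟨b, by ring⟩ h, fun h => ?_⟩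
    rw [← mul_assoc]
    exact Nat.Coprime.mul_dvd_of_dvd_of_dvd (Nat.Coprime.mul_left (hab.coprime_dvd_left hp) hab)
      h hb
  constructor
  · rintro ⟨h1, h2⟩
    have ha := dvd_of_mul_right_dvd h1
    have hb := dvd_of_mul_left_dvd h1
    refine ⟨⟨ha, fun p hp hpa hpH h => h2 p hp (hpa.mul_right b) hpH ?_⟩,
      ⟨hb, fun p hp hpb hpH h => h2 p hp (hpb.mul_left a) hpH ?_⟩⟩
    · exact (aux hab p hpa hb).mpr h
    · rw [mul_comm a b]; exact (aux hab.symm p hpb ha).mpr h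
  · rintro ⟨⟨ha, ha'⟩, ⟨hb, hb'⟩⟩
    refine ⟨hab.mul_dvd_of_dvd_of_dvd ha hb, fun p hp hpab hpH h => ?_⟩
    rcases (Nat.Prime.dvd_mul hp).mp hpab with hpa | hpb
    · exact ha' p hp hpa hpH ((aux hab p hpa hb).mp h)
    · rw [mul_comm a b] at h
      exact hb' p hp hpb hpH ((aux hab.symm p hpb ha).mp h)

lemma primRootCount_one (n : ℕ) : primRootCount n 1 = 1 := by
  rw [primRootCount, Finset.card_eq_one]
  refine ⟨0, ?_⟩
  ext H
  simp only [Finset.range_one, Finset.mem_filter, Finset.mem_singleton, and_iff_left_iff_imp]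
  rintro rfl
  exact ⟨one_dvd _, fun p hp h => absurd (Nat.dvd_one.mp h) hp.one_lt.ne'⟩

lemma primRootCount_mul {n a b : ℕ} (ha : a ≠ 0) (hb : b ≠ 0) (hab : a.Coprime b) :
    primRootCount n (a * b) = primRootCount n a * primRootCount n b := by
  classical
  rw [primRootCount, primRootCount, primRootCount, ← Finset.card_product]
  refine Finset.card_nbij' (fun H => (H % a, H % b))
    (fun x => (Nat.chineseRemainder hab x.1 x.2 : ℕ)) ?_ ?_ ?_ ?_
  · intro H hH
    simp only [Finset.coe_filter, Finset.mem_range, Set.mem_ofPred_eq, Finset.coe_product,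
      Set.mem_prod] at hH ⊢
    rw [isPrimRoot_mul_iff hab] at hH
    exact ⟨⟨Nat.mod_lt _ (by omega), (isPrimRoot_mod_iff _ _ _).mpr hH.2.1⟩,
      ⟨Nat.mod_lt _ (by omega), (isPrimRoot_mod_iff _ _ _).mpr hH.2.2⟩⟩
  · rintro ⟨x, y⟩ hxy
    simp only [Finset.coe_filter, Finset.mem_range, Set.mem_ofPred_eq, Finset.coe_product,
      Set.mem_prod] at hxy ⊢
    have h := (Nat.chineseRemainder hab x y).2
    refine ⟨Nat.chineseRemainder_lt_mul hab x y ha hb, (isPrimRoot_mul_iff hab).mpr ⟨?_, ?_⟩⟩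
    · rw [← isPrimRoot_mod_iff, h.1, isPrimRoot_mod_iff]; exact hxy.1.2
    · rw [← isPrimRoot_mod_iff, h.2, isPrimRoot_mod_iff]; exact hxy.2.2
  · intro H hH
    simp only [Finset.coe_filter, Finset.mem_range, Set.mem_ofPred_eq] at hH
    have h := (Nat.chineseRemainder hab (H % a) (H % b)).2
    have h1 := Nat.chineseRemainder_lt_mul hab (H % a) (H % b) ha hb
    have h2 := (Nat.modEq_and_modEq_iff_modEq_mul hab).mp
      ⟨h.1.trans (Nat.mod_modEq H a), h.2.trans (Nat.mod_modEq H b)⟩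
    exact Nat.ModEq.eq_of_lt_of_lt h2 h1 hH.1
  · rintro ⟨x, y⟩ hxy
    simp only [Finset.coe_filter, Finset.mem_range, Set.mem_ofPred_eq, Finset.coe_product,
      Set.mem_prod] at hxy
    have h := (Nat.chineseRemainder hab x y).2
    ext
    · exact Eq.trans h.1 (Nat.mod_eq_of_lt hxy.1.1)
    · exact Eq.trans h.2 (Nat.mod_eq_of_lt hxy.2.1)

/-- If the roots of `H² + n²` modulo `A` that agree with a fixed root modulo a divisor `d` and with
its negative modulo `A / d` are always constrained by `gcd d (A / d) ≤ B`, there are at most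
`B` roots for each divisor. -/
lemma primRootCount_le {n A B : ℕ} (hA : A ≠ 0)
    (hB : ∀ d, d ∣ A → ∀ y, A ∣ y ^ 2 + n ^ 2 → Nat.gcd d (A / d) ∣ 2 * y →
      Nat.gcd d (A / d) ≤ B) :
    primRootCount n A ≤ A.divisors.card * B := by
  classical
  rw [primRootCount]
  set R := (Finset.range A).filter fun H => IsPrimRoot n A H with hR
  rcases R.eq_empty_or_nonempty with h0 | ⟨y, hy⟩
  · simp [h0]
  have hroot : ∀ x ∈ R, x < A ∧ A ∣ x ^ 2 + n ^ 2 := by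
    intro x hx
    rw [hR, Finset.mem_filter, Finset.mem_range] at hx
    exact ⟨hx.1, hx.2.1⟩
  have hdvd : ∀ x ∈ R, (A : ℤ) ∣ (x - y) * (x + y) := by
    intro x hx
    have h1 : (A : ℤ) ∣ (x : ℤ) ^ 2 + (n : ℤ) ^ 2 := by exact_mod_cast (hroot x hx).2
    have h2 : (A : ℤ) ∣ (y : ℤ) ^ 2 + (n : ℤ) ^ 2 := by exact_mod_cast (hroot y hy).2
    rw [show ((x : ℤ) - y) * (x + y) = ((x : ℤ) ^ 2 + (n : ℤ) ^ 2) - ((y : ℤ) ^ 2 + (n : ℤ) ^ 2) by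
      ring]
    exact dvd_sub h1 h2
  set φ : ℕ → ℕ := fun x => Int.gcd A (x - y) with hφ
  have hmaps : ∀ x ∈ R, φ x ∈ A.divisors := by
    intro x hx
    rw [Nat.mem_divisors]
    exact ⟨Int.natCast_dvd_natCast.mp (Int.gcd_dvd_left (A : ℤ) (x - y)), hA⟩
  rw [mul_comm]
  refine Finset.card_le_mul_card_image_of_maps_to hmaps B fun d hd => ?_
  obtain ⟨hdA, -⟩ := Nat.mem_divisors.mp hd
  obtain ⟨e, he⟩ := hdA
  have hd0 : 0 < d := Nat.pos_of_ne_zero (by rintro rfl; simp at he; exact hA he)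
  have hAd : A / d = e := by rw [he]; exact Nat.mul_div_cancel_left e hd0
  have hfib : ∀ x ∈ R.filter fun x => φ x = d, (d : ℤ) ∣ x - y ∧ (e : ℤ) ∣ x + y := by
    intro x hx
    rw [Finset.mem_filter] at hx
    have h1 : (d : ℤ) ∣ x - y := by rw [← hx.2]; exact Int.gcd_dvd_right _ _
    refine ⟨h1, ?_⟩
    obtain ⟨k, hk⟩ := h1
    have h2 := hdvd x hx.1
    have h3 : Int.gcd (e : ℤ) k = 1 := by
      have : Int.gcd ((d : ℤ) * e) (d * k) = d := by
        rw [← hk, ← Nat.cast_mul, ← he]; exact hx.2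
      rw [Int.gcd_mul_left] at this
      simpa [hd0.ne'] using this
    rw [hk, he, mul_assoc] at h2
    push_cast at h2
    have h4 : (e : ℤ) ∣ k * (x + y) := by
      refine Int.dvd_of_mul_dvd_mul_left (a := (d : ℤ)) (by exact_mod_cast hd0.ne') ?_
      exact h2
    exact Int.dvd_of_dvd_mul_right_of_gcd_one h4 h3
  set S := R.filter fun x => φ x = d with hS
  rcases S.eq_empty_or_nonempty with h0 | ⟨x₀, hx₀⟩
  · simp [h0]
  have hx₀R : x₀ ∈ R := (Finset.mem_filter.mp hx₀).1
  set g := Nat.gcd d e with hg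
  have hgB : g ≤ B := by
    rw [hg, ← hAd]
    refine hB d ⟨e, he⟩ y (hroot y hy).2 ?_
    rw [hAd]
    have h1 : (g : ℤ) ∣ x₀ - y := dvd_trans (by exact_mod_cast Nat.gcd_dvd_left d e) (hfib x₀ hx₀).1
    have h2 : (g : ℤ) ∣ x₀ + y := dvd_trans (by exact_mod_cast Nat.gcd_dvd_right d e) (hfib x₀ hx₀).2
    have h3 : (g : ℤ) ∣ ((2 * y : ℕ) : ℤ) := by
      rw [show ((2 * y : ℕ) : ℤ) = (x₀ + y : ℤ) - (x₀ - y) by push_cast; ring]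
      exact dvd_sub h2 h1
    exact_mod_cast h3
  refine le_trans ?_ hgB
  set L := Nat.lcm d e with hL
  have hgL : g * L = A := by rw [hg, hL, Nat.gcd_mul_lcm, he]
  have hL0 : 0 < L := Nat.pos_of_ne_zero (by rintro h; rw [h, mul_zero] at hgL; exact hA hgL.symm)
  have hmod : ∀ x ∈ S, x % L = x₀ % L := by
    intro x hx
    have h1 : (d : ℤ) ∣ (x₀ : ℤ) - x := by
      rw [show (x₀ : ℤ) - x = (x₀ - y) - (x - y) by ring]
      exact dvd_sub (hfib x₀ hx₀).1 (hfib x hx).1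
    have h2 : (e : ℤ) ∣ (x₀ : ℤ) - x := by
      rw [show (x₀ : ℤ) - x = (x₀ + y) - (x + y) by ring]
      exact dvd_sub (hfib x₀ hx₀).2 (hfib x hx).2
    have h3 : (x ≡ x₀ [MOD d]) := Nat.modEq_iff_dvd.mpr h1
    have h4 : (x ≡ x₀ [MOD e]) := Nat.modEq_iff_dvd.mpr h2
    have h5 : (L : ℤ) ∣ (x₀ : ℤ) - x := by
      rw [hL]
      have := lcm_dvd h1 h2
      rw [← Int.coe_lcm, Int.lcm] at this
      simpa using this
    exact Nat.modEq_iff_dvd.mpr h5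
  calc S.card ≤ (Finset.range g).card := by
        refine Finset.card_le_card_of_injOn (fun x => x / L) ?_ ?_
        · intro x hx
          have hxR := (hroot x (Finset.mem_filter.mp hx).1).1
          simp only [Finset.coe_range, Set.mem_Iio]
          exact Nat.div_lt_of_lt_mul (by rw [mul_comm, hgL]; exact hxR)
        · intro x hx x' hx' hxx'
          have h1 := hmod x hx
          have h2 := hmod x' hx'
          simp only at hxx'
          rw [← Nat.div_add_mod x L, ← Nat.div_add_mod x' L, hxx', h1, h2]
    _ = g := Finset.card_range g

lemma primRootCount_le_sqrt {n A : ℕ} (hA : A ≠ 0) :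
    primRootCount n A ≤ A.divisors.card * A.sqrt := by
  refine primRootCount_le hA fun d hd y _ _ => ?_
  rw [Nat.le_sqrt]
  refine Nat.le_of_dvd (Nat.pos_of_ne_zero hA) ?_
  calc Nat.gcd d (A / d) * Nat.gcd d (A / d) ∣ d * (A / d) :=
        mul_dvd_mul (Nat.gcd_dvd_left _ _) (Nat.gcd_dvd_right _ _)
    _ = A := Nat.mul_div_cancel' hd

lemma primRootCount_one_le {A : ℕ} (hA : A ≠ 0) :
    primRootCount 1 A ≤ A.divisors.card * 2 := by
  refine primRootCount_le hA fun d hd y hy hg => ?_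
  set g := Nat.gcd d (A / d)
  have h1 : g ∣ y ^ 2 + 1 ^ 2 := (Nat.gcd_dvd_left _ _).trans (hd.trans hy)
  have h2 : g ∣ 2 * y ^ 2 := hg.trans ⟨y, by ring⟩
  have h3 : g ∣ 2 * y ^ 2 + 2 := by
    refine (h1.mul_left 2).trans ⟨1, by ring⟩
  exact Nat.le_of_dvd two_pos ((Nat.dvd_add_right h2).mp h3)

lemma isPrimRoot_prime_pow_iff {n p k H : ℕ} (hp : p.Prime) (hpn : p.Coprime (2 * n))
    (hk : k ≠ 0) : IsPrimRoot n (p ^ k) H ↔ p ^ k ∣ H ^ 2 + n ^ 2 := by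
  refine ⟨fun h => h.1, fun h => ⟨h, fun q hq hqp hqH _ => ?_⟩⟩
  obtain rfl : q = p := (Nat.prime_dvd_prime_iff_eq hq hp).mp (hq.dvd_of_dvd_pow hqp)
  have hp2 : q.Coprime 2 := Nat.Coprime.coprime_mul_right_right hpn
  have hpn' : q.Coprime n := Nat.Coprime.coprime_mul_left_right hpn
  have hqH' : q ∣ H := hp2.dvd_of_dvd_mul_left hqH
  have h1 : q ∣ H ^ 2 + n ^ 2 := (dvd_pow_self q hk).trans h
  have h2 : q ∣ n ^ 2 := (Nat.dvd_add_right (dvd_pow hqH' two_ne_zero)).mp h1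
  exact (Nat.Prime.coprime_iff_not_dvd hp).mp hpn' (hp.dvd_of_dvd_pow h2)

lemma primRootCount_prime_pow {n p k : ℕ} (hp : p.Prime) (hpn : p.Coprime (2 * n))
    (hk : k ≠ 0) : (primRootCount n (p ^ k) : ℤ) = 1 + ZMod.χ₄ p := by
  classical
  have := Fact.mk hp
  have hp2 : p.Coprime 2 := Nat.Coprime.coprime_mul_right_right hpn
  have hpn' : ¬ p ∣ n :=
    (Nat.Prime.coprime_iff_not_dvd hp).mp (Nat.Coprime.coprime_mul_left_right hpn)
  have hp2' : ¬ p ∣ 2 := (Nat.Prime.coprime_iff_not_dvd hp).mp hp2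
  have hodd : p % 2 = 1 := by
    rcases hp.eq_two_or_odd with rfl | h
    · exact absurd (dvd_refl 2) hp2'
    · exact h
  simp only [primRootCount, isPrimRoot_prime_pow_iff hp hpn hk]
  have h4 : p % 4 = 1 ∨ p % 4 = 3 := by omega
  rcases h4 with h4 | h4
  · rw [ZMod.χ₄_nat_one_mod_four h4]
    have hroot : ∃ y < p ^ k, p ^ k ∣ y ^ 2 + n ^ 2 := by
      obtain ⟨x, hx⟩ := ZMod.exists_sq_eq_neg_one_iff.mpr (show p % 4 ≠ 3 by omega)
      obtain ⟨m, rfl⟩ := ZMod.natCast_zmod_surjective x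
      have h1 : (p : ℤ) ∣ (m : ℤ) ^ 2 - (-1) := by
        rw [← ZMod.intCast_zmod_eq_zero_iff_dvd]
        push_cast
        rw [pow_two, ← hx]; ring
      have h2 := dvd_sub_pow_of_dvd_sub h1 (k - 1)
      rw [Nat.sub_add_cancel (Nat.pos_of_ne_zero hk)] at h2
      have hoddp : Odd (p ^ (k - 1)) := (Nat.odd_iff.mpr hodd).pow
      rw [hoddp.neg_one_pow, sub_neg_eq_add] at h2
      set z := n * m ^ p ^ (k - 1) with hz
      have h3 : p ^ k ∣ z ^ 2 + n ^ 2 := by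
        have : ((p ^ k : ℕ) : ℤ) ∣ ((z ^ 2 + n ^ 2 : ℕ) : ℤ) := by
          rw [hz]
          push_cast
          refine (h2.mul_left ((n : ℤ) ^ 2)).trans ?_
          rw [← pow_mul, mul_comm 2 (p ^ (k - 1)), pow_mul]
          exact dvd_of_eq (by ring)
        exact_mod_cast this
      refine ⟨z % p ^ k, Nat.mod_lt _ (pow_pos hp.pos k), ?_⟩
      have h5 := (isPrimRoot_prime_pow_iff (H := z) hp hpn hk).mpr h3
      rw [← isPrimRoot_mod_iff] at h5
      exact h5.1
    obtain ⟨y, hy, hyr⟩ := hroot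
    have hpy : ¬ p ∣ y := by
      intro h
      have h1 : p ∣ y ^ 2 + n ^ 2 := (dvd_pow_self p hk).trans hyr
      exact hpn' (hp.dvd_of_dvd_pow ((Nat.dvd_add_right (dvd_pow h two_ne_zero)).mp h1))
    have hppk : p ∣ p ^ k := dvd_pow_self p hk
    have hy0 : 0 < y := Nat.pos_of_ne_zero (by rintro rfl; exact hpy (dvd_zero p))
    have hset : (Finset.range (p ^ k)).filter (fun H => p ^ k ∣ H ^ 2 + n ^ 2)
        = {y, p ^ k - y} := by
      ext x
      simp only [Finset.mem_filter, Finset.mem_range, Finset.mem_insert, Finset.mem_singleton]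
      constructor
      · rintro ⟨hx, hxr⟩
        have h1 : ((p ^ k : ℕ) : ℤ) ∣ ((x : ℤ) - y) * (x + y) := by
          rw [show ((x : ℤ) - y) * (x + y) =
            ((x ^ 2 + n ^ 2 : ℕ) : ℤ) - ((y ^ 2 + n ^ 2 : ℕ) : ℤ) by push_cast; ring]
          exact dvd_sub (by exact_mod_cast hxr) (by exact_mod_cast hyr)
        by_cases h2 : (p : ℤ) ∣ (x : ℤ) - y
        · have h3 : ¬ (p : ℤ) ∣ (x : ℤ) + y := by
            intro h3
            have h4 := dvd_sub h3 h2
            rw [show (x : ℤ) + y - (x - y) = ((2 * y : ℕ) : ℤ) by push_cast; ring] at h4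
            exact hpy (hp2.dvd_of_dvd_mul_left (by exact_mod_cast h4))
          have h4 : ((p : ℤ) ^ k) ∣ (x : ℤ) - y := by
            rw [mul_comm] at h1; push_cast at h1
            exact (Nat.prime_iff_prime_int.mp hp).pow_dvd_of_dvd_mul_left k h3 h1
          left
          have h5 : y ≡ x [MOD p ^ k] := Nat.modEq_iff_dvd.mpr (by push_cast; exact h4)
          exact (Nat.ModEq.eq_of_lt_of_lt h5 hy hx).symm
        · have h4 : ((p : ℤ) ^ k) ∣ (x : ℤ) + y := by
            push_cast at h1
            exact (Nat.prime_iff_prime_int.mp hp).pow_dvd_of_dvd_mul_left k h2 h1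
          right
          have h5 : p ^ k ∣ x + y := by exact_mod_cast h4
          obtain ⟨c, hc⟩ := h5
          have : c < 2 := by
            by_contra hcon
            have : p ^ k * 2 ≤ p ^ k * c := Nat.mul_le_mul_left _ (by omega)
            omega
          interval_cases c <;> omega
      · rintro (rfl | rfl)
        · exact ⟨hy, hyr⟩
        · refine ⟨by omega, ?_⟩
          have : ((p ^ k : ℕ) : ℤ) ∣ (((p ^ k - y) ^ 2 + n ^ 2 : ℕ) : ℤ) := by
            have hsub : ((p ^ k - y : ℕ) : ℤ) = ((p ^ k : ℕ) : ℤ) - y := Nat.cast_sub hy.le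
            rw [Nat.cast_add, Nat.cast_pow (p ^ k - y) 2, hsub,
              show (((p ^ k : ℕ) : ℤ) - y) ^ 2 + ((n ^ 2 : ℕ) : ℤ) =
              ((p ^ k : ℕ) : ℤ) * (((p ^ k : ℕ) : ℤ) - 2 * y) + ((y ^ 2 + n ^ 2 : ℕ) : ℤ) by
                push_cast; ring]
            exact dvd_add (dvd_mul_right _ _) (by exact_mod_cast hyr)
          exact_mod_cast this
    rw [hset, Finset.card_pair]
    · norm_num
    · intro h
      have : p ∣ 2 * y := by rw [show 2 * y = p ^ k by omega]; exact hppk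
      exact hpy (hp2.dvd_of_dvd_mul_left this)
  · rw [ZMod.χ₄_nat_three_mod_four h4]
    rw [Finset.filter_eq_empty_iff.mpr]
    · simp
    intro x _ hx
    have h1 : p ∣ x ^ 2 + n ^ 2 := (dvd_pow_self p hk).trans hx
    have h2 : ((x : ZMod p)) ^ 2 = - (n : ZMod p) ^ 2 := by
      rw [← ZMod.natCast_eq_zero_iff] at h1
      push_cast at h1
      exact eq_neg_of_add_eq_zero_left h1
    refine ZMod.mod_four_ne_three_of_sq_eq_neg_sq' (y := (n : ZMod p)) ?_ h2 h4
    rwa [Ne, ZMod.natCast_eq_zero_iff]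

namespace ArithmeticFunction

/-- The restriction of an arithmetic function to the integers composed of primes dividing `N`. -/
noncomputable def smoothPart (N : ℕ) (f : ArithmeticFunction ℝ) : ArithmeticFunction ℝ :=
  ⟨fun m => if m.primeFactors ⊆ N.primeFactors then f m else 0, by simp⟩

/-- The restriction of an arithmetic function to the integers coprime to `N`. -/
noncomputable def coprimePart (N : ℕ) (f : ArithmeticFunction ℝ) : ArithmeticFunction ℝ :=
  ⟨fun m => if m.Coprime N then f m else 0, by simp⟩

lemma smoothPart_apply (N : ℕ) (f : ArithmeticFunction ℝ) (m : ℕ) :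
    smoothPart N f m = if m.primeFactors ⊆ N.primeFactors then f m else 0 := rfl

lemma coprimePart_apply (N : ℕ) (f : ArithmeticFunction ℝ) (m : ℕ) :
    coprimePart N f m = if m.Coprime N then f m else 0 := rfl

lemma IsMultiplicative.smoothPart {f : ArithmeticFunction ℝ} (hf : f.IsMultiplicative) (N : ℕ) :
    (smoothPart N f).IsMultiplicative := by
  rw [IsMultiplicative.iff_ne_zero]
  refine ⟨by simp [smoothPart_apply, hf.1], fun {a b} ha hb hab => ?_⟩
  simp only [smoothPart_apply, Nat.primeFactors_mul ha hb, Finset.union_subset_iff,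
    hf.map_mul_of_coprime hab]
  split_ifs <;> simp_all

lemma IsMultiplicative.coprimePart {f : ArithmeticFunction ℝ} (hf : f.IsMultiplicative) (N : ℕ) :
    (coprimePart N f).IsMultiplicative := by
  rw [IsMultiplicative.iff_ne_zero]
  refine ⟨by simp [coprimePart_apply, hf.1], fun {a b} ha hb hab => ?_⟩
  simp only [coprimePart_apply, Nat.coprime_mul_iff_left, hf.map_mul_of_coprime hab]
  split_ifs <;> simp_all

lemma mul_apply_prime_pow (f g : ArithmeticFunction ℝ) {p : ℕ} (hp : p.Prime) (k : ℕ) :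
    (f * g) (p ^ k) = ∑ i ∈ Finset.range (k + 1), f (p ^ i) * g (p ^ (k - i)) := by
  rw [mul_apply, Nat.sum_divisorsAntidiagonal (fun a b => f a * g b),
    Nat.sum_divisors_prime_pow hp]
  refine Finset.sum_congr rfl fun i hi => ?_
  rw [Nat.pow_div (Nat.lt_succ_iff.mp (Finset.mem_range.mp hi)) hp.pos]

lemma smoothPart_mul_coprimePart {f : ArithmeticFunction ℝ} (hf : f.IsMultiplicative) {N : ℕ}
    (hN : N ≠ 0) : smoothPart N f * coprimePart N f = f := by
  rw [((hf.smoothPart N).mul (hf.coprimePart N)).eq_iff_eq_on_prime_powers _ f hf]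
  intro p k hp
  rcases Nat.eq_zero_or_pos k with rfl | hk
  · simp [smoothPart_apply, coprimePart_apply, hf.1]
  rw [mul_apply_prime_pow _ _ hp]
  by_cases hpN : p ∣ N
  · rw [Finset.sum_eq_single k]
    · simp [smoothPart_apply, coprimePart_apply, hf.1, Nat.primeFactors_prime_pow hk.ne' hp,
        hp, hpN, hN]
    · intro i hi hik
      have h : ¬ (p ^ (k - i)).Coprime N := by
        rw [Nat.coprime_pow_left_iff (by rw [Finset.mem_range] at hi; omega),
          hp.coprime_iff_not_dvd]
        exact not_not.mpr hpN
      rw [coprimePart_apply, if_neg h, mul_zero]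
    · simp
  · rw [Finset.sum_eq_single 0]
    · have h : (p ^ k).Coprime N := Nat.Coprime.pow_left k (hp.coprime_iff_not_dvd.mpr hpN)
      simp [smoothPart_apply, coprimePart_apply, hf.1, h]
    · intro i _ hi
      have h : ¬ (p ^ i).primeFactors ⊆ N.primeFactors := by
        rw [Nat.primeFactors_prime_pow hi hp, Finset.singleton_subset_iff]
        exact fun h => hpN (Nat.dvd_of_mem_primeFactors h)
      rw [smoothPart_apply, if_neg h, zero_mul]
    · simp

/-- The arithmetic function counting primitive roots. -/
noncomputable def rootFun (n : ℕ) : ArithmeticFunction ℝ :=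
  ⟨fun A => primRootCount n A, by simp [primRootCount]⟩

lemma rootFun_apply (n A : ℕ) : rootFun n A = primRootCount n A := rfl

lemma isMultiplicative_rootFun (n : ℕ) : (rootFun n).IsMultiplicative := by
  rw [IsMultiplicative.iff_ne_zero]
  refine ⟨by simp [rootFun_apply, primRootCount_one], fun {a b} ha hb hab => ?_⟩
  simp [rootFun_apply, primRootCount_mul ha hb hab]

/-- The character `χ₄` as a real arithmetic function. -/
noncomputable def chiFour : ArithmeticFunction ℝ :=
  ⟨fun m => ((ZMod.χ₄ m : ℤ) : ℝ), by simp⟩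

lemma chiFour_apply (m : ℕ) : chiFour m = ((ZMod.χ₄ m : ℤ) : ℝ) := rfl

lemma isMultiplicative_chiFour : chiFour.IsMultiplicative :=
  ⟨by simp [chiFour_apply], fun {a b} _ => by
    rw [chiFour_apply, chiFour_apply, chiFour_apply, Nat.cast_mul, map_mul, Int.cast_mul]⟩

lemma chiFour_pow (p k : ℕ) : chiFour (p ^ k) = chiFour p ^ k := by
  rw [chiFour_apply, chiFour_apply, Nat.cast_pow, map_pow, Int.cast_pow]

/-- The function `k² ↦ μ(k)` supported on squares. -/
noncomputable def squareMoebius : ArithmeticFunction ℝ :=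
  ⟨fun m => if IsSquare m then (moebius m.sqrt : ℝ) else 0, by simp⟩

lemma squareMoebius_apply (m : ℕ) :
    squareMoebius m = if IsSquare m then (moebius m.sqrt : ℝ) else 0 := rfl

lemma isMultiplicative_squareMoebius : squareMoebius.IsMultiplicative := by
  rw [IsMultiplicative.iff_ne_zero]
  refine ⟨by simp [squareMoebius_apply], fun {a b} _ _ hab => ?_⟩
  have hu : ∀ {a b : ℕ}, a.Coprime b → IsSquare (a * b) → IsSquare a := by
    intro a b hab ⟨c, hc⟩
    obtain ⟨d, hd⟩ := exists_eq_pow_of_mul_eq_pow (a := a) (b := b) (c := c) (k := 2)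
      (Nat.isUnit_iff.mpr hab) (by rw [hc, pow_two])
    exact ⟨d, by rw [hd, pow_two]⟩
  simp only [squareMoebius_apply]
  by_cases ha : IsSquare a
  · by_cases hb : IsSquare b
    · obtain ⟨c, rfl⟩ := ha
      obtain ⟨d, rfl⟩ := hb
      have hcd : c.Coprime d := (Nat.Coprime.coprime_mul_right hab).coprime_mul_right_right
      rw [if_pos ((IsSquare.mul_self c).mul (.mul_self d)), if_pos (.mul_self c),
        if_pos (.mul_self d),
        show c * c * (d * d) = (c * d) * (c * d) by ring, Nat.sqrt_eq, Nat.sqrt_eq, Nat.sqrt_eq,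
        isMultiplicative_moebius.map_mul_of_coprime hcd]
      push_cast; ring
    · rw [if_neg hb, if_neg fun h => hb (hu hab.symm (by rwa [mul_comm] at h)), mul_zero]
  · rw [if_neg ha, if_neg fun h => ha (hu hab h), zero_mul]

lemma squareMoebius_prime_pow {p : ℕ} (hp : p.Prime) (i : ℕ) :
    squareMoebius (p ^ i) = if i = 0 then 1 else if i = 2 then -1 else 0 := by
  rw [squareMoebius_apply]
  by_cases hi : Even i
  · obtain ⟨j, rfl⟩ := hi
    rw [if_pos ⟨p ^ j, pow_add p j j⟩, pow_add, Nat.sqrt_eq]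
    rcases Nat.eq_zero_or_pos j with rfl | hj
    · simp
    · rw [moebius_apply_prime_pow hp hj.ne']
      by_cases hj1 : j = 1
      · subst hj1; simp
      · rw [if_neg hj1, if_neg (by omega), if_neg (by omega)]; simp
  · rw [if_neg, if_neg (by rintro rfl; exact hi (by decide)),
      if_neg (by rintro rfl; exact hi (by decide))]
    rintro ⟨c, hc⟩
    obtain ⟨j, -, rfl⟩ := (Nat.dvd_prime_pow hp).mp (Dvd.intro _ hc.symm)
    rw [← pow_add] at hc
    exact hi ⟨j, Nat.pow_right_injective hp.two_le hc⟩

lemma coprimePart_rootFun {n N : ℕ} (hnN : 2 * n ∣ N) :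
    coprimePart N (rootFun n) =
      coprimePart N squareMoebius * (coprimePart N ↑zeta * coprimePart N chiFour) := by
  have hz : (zeta : ArithmeticFunction ℝ).IsMultiplicative := isMultiplicative_zeta.natCast
  have h1 := (isMultiplicative_rootFun n).coprimePart N
  have h2 := hz.coprimePart N
  have h3 := isMultiplicative_chiFour.coprimePart N
  have h4 := isMultiplicative_squareMoebius.coprimePart N
  rw [h1.eq_iff_eq_on_prime_powers _ _ (h4.mul (h2.mul h3))]
  intro p k hp
  rcases Nat.eq_zero_or_pos k with rfl | hk
  · rw [pow_zero, h1.1, (h4.mul (h2.mul h3)).1]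
  by_cases hpN : p ∣ N
  · have hc : ∀ {i}, 0 < i → ¬ (p ^ i).Coprime N := by
      intro i hi
      rw [Nat.coprime_pow_left_iff hi, hp.coprime_iff_not_dvd]
      exact not_not.mpr hpN
    rw [coprimePart_apply, if_neg (hc hk), mul_apply_prime_pow _ _ hp, eq_comm]
    refine Finset.sum_eq_zero fun i hi => ?_
    rcases Nat.eq_zero_or_pos i with rfl | hi0
    · rw [mul_apply_prime_pow _ _ hp, Finset.sum_eq_zero, mul_zero]
      intro j hj
      rcases Nat.eq_zero_or_pos j with rfl | hj0
      · rw [coprimePart_apply _ chiFour, if_neg (hc (by omega)), mul_zero]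
      · rw [coprimePart_apply, if_neg (hc hj0), zero_mul]
    · rw [coprimePart_apply, if_neg (hc hi0), zero_mul]
  · have hpc : p.Coprime N := hp.coprime_iff_not_dvd.mpr hpN
    have hc : ∀ i, (p ^ i).Coprime N := fun i => hpc.pow_left i
    set χ := chiFour p with hχ
    have hG : ∀ j, (coprimePart N (zeta : ArithmeticFunction ℝ) * coprimePart N chiFour) (p ^ j) =
        ∑ i ∈ Finset.range (j + 1), χ ^ i := by
      intro j
      rw [mul_apply_prime_pow _ _ hp, ← Finset.sum_range_reflect]
      refine Finset.sum_congr rfl fun i hi => ?_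
      rw [Finset.mem_range] at hi
      rw [coprimePart_apply, if_pos (hc _), coprimePart_apply, if_pos (hc _), chiFour_pow,
        natCoe_apply, zeta_apply_ne (pow_ne_zero _ hp.ne_zero)]
      rw [show j - (j + 1 - 1 - i) = i by omega]; simp [hχ]
    have hμ : ∀ i, coprimePart N squareMoebius (p ^ i) =
        if i = 0 then 1 else if i = 2 then -1 else 0 := by
      intro i
      rw [coprimePart_apply, if_pos (hc _), squareMoebius_prime_pow hp]
    rw [coprimePart_apply, if_pos (hc _), mul_apply_prime_pow _ _ hp]
    simp only [hμ, hG]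
    have hroot : rootFun n (p ^ k) = 1 + χ := by
      rw [rootFun_apply, hχ, chiFour_apply]
      exact_mod_cast primRootCount_prime_pow (n := n) hp (hpc.coprime_dvd_right hnN) hk.ne'
    have hχ2 : χ ^ 2 = 1 := by
      have h2p : p % 2 = 1 := by
        rcases hp.eq_two_or_odd with rfl | h
        · exact absurd ((Dvd.intro _ rfl).trans hnN) hpN
        · exact h
      have : p % 4 = 1 ∨ p % 4 = 3 := by omega
      rcases this with h | h
      · simp [hχ, chiFour_apply, ZMod.χ₄_nat_one_mod_four h]
      · simp [hχ, chiFour_apply, ZMod.χ₄_nat_three_mod_four h]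
    rw [hroot]
    obtain ⟨j, rfl | rfl⟩ : ∃ j, k = 1 ∨ k = j + 2 := ⟨k - 2, by omega⟩
    · simp [Finset.sum_range_succ]
    · rw [Finset.sum_range_succ', Finset.sum_range_succ', Finset.sum_range_succ']
      have : ∑ i ∈ Finset.range j, (if i + 1 + 1 + 1 = 0 then (1:ℝ) else if i + 1 + 1 + 1 = 2
          then -1 else 0) * ∑ l ∈ Finset.range (j + 2 - (i + 1 + 1 + 1) + 1), χ ^ l = 0 := by
        refine Finset.sum_eq_zero fun i _ => ?_
        rw [if_neg (by omega), if_neg (by omega), zero_mul]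
      rw [this]
      simp only [Nat.add_eq_zero_iff, zero_add, one_ne_zero, and_false, if_false, if_true,
        Nat.add_sub_cancel, Nat.sub_zero]
      norm_num
      rw [Finset.sum_range_succ _ (j + 2), Finset.sum_range_succ _ (j + 1)]
      have h5 : (χ ^ j) = 1 ∨ χ ^ j = χ := by
        rcases Nat.even_or_odd' j with ⟨i, rfl | rfl⟩
        · left; rw [pow_mul, hχ2, one_pow]
        · right; rw [pow_succ, pow_mul, hχ2, one_pow, one_mul]
      rw [pow_add, pow_add, hχ2]
      rcases h5 with h5 | h5 <;> rw [h5]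
      · ring
      · linear_combination -hχ2

end ArithmeticFunction

namespace ArithmeticFunction

lemma sum_coprime_eq_sum_divisors {N : ℕ} (hN : N ≠ 0) (f : ℕ → ℝ) (b : ℕ) :
    ∑ d ∈ Finset.Ioc 0 b, (if d.Coprime N then f d else 0) =
      ∑ e ∈ N.divisors, (moebius e : ℝ) * ∑ j ∈ Finset.Ioc 0 (b / e), f (e * j) := by
  have hind : ∀ d, (if d.Coprime N then f d else 0) =
      ∑ e ∈ N.divisors, (moebius e : ℝ) * if e ∣ d then f d else 0 := by
    intro d
    have h1 : ∑ e ∈ (d.gcd N).divisors, moebius e = if d.gcd N = 1 then 1 else 0 := by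
      rw [← coe_zeta_mul_apply, coe_zeta_mul_moebius, one_apply]
    have h2 : (d.gcd N).divisors = N.divisors.filter fun e => e ∣ d := by
      ext e
      simp only [Nat.mem_divisors, Finset.mem_filter, Nat.dvd_gcd_iff]
      have : d.gcd N ≠ 0 := Nat.gcd_ne_zero_right hN
      tauto
    have h3 : ∑ e ∈ N.divisors, (moebius e : ℝ) * (if e ∣ d then f d else 0) =
        ((∑ e ∈ (d.gcd N).divisors, moebius e : ℤ) : ℝ) * f d := by
      rw [h2, Finset.sum_filter]
      push_cast
      rw [Finset.sum_mul]
      refine Finset.sum_congr rfl fun e _ => ?_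
      split_ifs <;> simp
    rw [h3, h1]
    by_cases h : d.Coprime N
    · rw [if_pos h, if_pos h]; simp
    · rw [if_neg h, if_neg h]; simp
  rw [Finset.sum_congr rfl fun d _ => hind d, Finset.sum_comm]
  refine Finset.sum_congr rfl fun e he => ?_
  have he0 : 0 < e := Nat.pos_of_mem_divisors he
  rw [← Finset.mul_sum, ← Finset.sum_filter]
  congr 1
  refine Finset.sum_nbij' (fun d => d / e) (fun j => e * j) ?_ ?_ ?_ ?_ ?_
  · intro d hd
    simp only [Finset.mem_filter, Finset.mem_Ioc] at hd ⊢
    obtain ⟨⟨h0, hb⟩, hed⟩ := hd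
    exact ⟨Nat.div_pos (Nat.le_of_dvd h0 hed) he0, Nat.div_le_div_right hb⟩
  · intro j hj
    simp only [Finset.mem_filter, Finset.mem_Ioc] at hj ⊢
    rw [Nat.le_div_iff_mul_le he0] at hj
    exact ⟨⟨Nat.mul_pos he0 hj.1, by rw [mul_comm]; exact hj.2⟩, dvd_mul_right e j⟩
  · intro d hd
    exact Nat.mul_div_cancel' (Finset.mem_filter.mp hd).2
  · intro j _
    exact Nat.mul_div_cancel_left j he0
  · intro d hd
    rw [Nat.mul_div_cancel' (Finset.mem_filter.mp hd).2]

/-- The density of the integers coprime to `N`. -/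
noncomputable def coprimeDensity (N : ℕ) : ℝ := ∑ e ∈ N.divisors, (moebius e : ℝ) / e

lemma abs_moebius_cast_le_one (e : ℕ) : |(moebius e : ℝ)| ≤ 1 := by
  exact_mod_cast abs_moebius_le_one (n := e)

lemma abs_coprimeDensity_le (N : ℕ) : |coprimeDensity N| ≤ N.divisors.card := by
  rw [coprimeDensity, ← nsmul_one, ← Finset.sum_const]
  refine (Finset.abs_sum_le_sum_abs _ _).trans (Finset.sum_le_sum fun e he => ?_)
  have h1 : (1 : ℝ) ≤ e := by exact_mod_cast Nat.pos_of_mem_divisors he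
  rw [abs_div, Nat.abs_cast, div_le_one (by linarith)]
  exact (abs_moebius_cast_le_one e).trans h1

lemma abs_sum_coprimePart_zeta_sub_le {N : ℕ} (hN : N ≠ 0) {Z : ℕ} {z : ℝ} (h1 : (Z : ℝ) ≤ z)
    (h2 : z < Z + 1) :
    |∑ k ∈ Finset.Ioc 0 Z, coprimePart N zeta k - coprimeDensity N * z| ≤ N.divisors.card := by
  have h : ∑ k ∈ Finset.Ioc 0 Z, coprimePart N zeta k =
      ∑ k ∈ Finset.Ioc 0 Z, if k.Coprime N then (1 : ℝ) else 0 := by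
    refine Finset.sum_congr rfl fun k hk => ?_
    have : k ≠ 0 := (Finset.mem_Ioc.mp hk).1.ne'
    simp [coprimePart_apply, this]
  rw [h, sum_coprime_eq_sum_divisors hN, coprimeDensity, Finset.sum_mul, ← Finset.sum_sub_distrib,
    ← nsmul_one, ← Finset.sum_const]
  refine (Finset.abs_sum_le_sum_abs _ _).trans (Finset.sum_le_sum fun e he => ?_)
  have he0 := Nat.pos_of_mem_divisors he
  have he1 : (0 : ℝ) < e := by exact_mod_cast he0
  have hfloor : |((Z / e : ℕ) : ℝ) - z / e| ≤ 1 := by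
    have h3 : ((Z / e : ℕ) : ℝ) * e ≤ Z := by exact_mod_cast Nat.div_mul_le_self Z e
    have h4 : (Z : ℝ) + 1 ≤ e * ((Z / e : ℕ) + 1) := by
      exact_mod_cast Nat.lt_mul_div_succ Z he0
    rw [abs_le]
    constructor
    · have : z / e ≤ (Z / e : ℕ) + 1 := by rw [div_le_iff₀ he1]; linarith
      linarith
    · have : ((Z / e : ℕ) : ℝ) ≤ z / e := by rw [le_div_iff₀ he1]; linarith
      linarith
  rw [Finset.sum_const, Nat.card_Ioc, Nat.sub_zero, nsmul_eq_mul, mul_one,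
    show (moebius e : ℝ) * ((Z / e : ℕ) : ℝ) - (moebius e : ℝ) / e * z =
      (moebius e : ℝ) * (((Z / e : ℕ) : ℝ) - z / e) by field_simp, abs_mul]
  exact mul_le_one₀ (abs_moebius_cast_le_one e) (abs_nonneg _) hfloor

lemma abs_chiFour_le_one (m : ℕ) : |chiFour m| ≤ 1 := by
  have h : ∀ a : ZMod 4, |ZMod.χ₄ a| ≤ 1 := by decide
  rw [chiFour_apply]
  exact_mod_cast h m

lemma sum_chiFour_mem (m : ℕ) :
    0 ≤ ∑ j ∈ Finset.Ioc 0 m, chiFour j ∧ ∑ j ∈ Finset.Ioc 0 m, chiFour j ≤ 1 := by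
  have h : ∑ j ∈ Finset.Ioc 0 m, chiFour j = if m % 4 = 1 ∨ m % 4 = 2 then 1 else 0 := by
    induction m with
    | zero => simp
    | succ m ih =>
      rw [Finset.sum_Ioc_succ_top (Nat.zero_le m), ih,
        chiFour_apply, ZMod.χ₄_nat_eq_if_mod_four]
      have : m % 4 < 4 := Nat.mod_lt _ (by norm_num)
      split_ifs <;> first | omega | norm_num
  rw [h]
  split_ifs <;> norm_num

lemma abs_sum_coprimePart_chiFour_le {N : ℕ} (hN : N ≠ 0) {a b : ℕ} (hab : a ≤ b) :
    |∑ d ∈ Finset.Ioc a b, coprimePart N chiFour d| ≤ N.divisors.card := by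
  have hsplit : ∑ d ∈ Finset.Ioc a b, coprimePart N chiFour d =
      ∑ d ∈ Finset.Ioc 0 b, coprimePart N chiFour d -
        ∑ d ∈ Finset.Ioc 0 a, coprimePart N chiFour d := by
    rw [← Finset.sum_Ioc_consecutive _ (Nat.zero_le a) hab]; ring
  simp only [coprimePart_apply] at hsplit ⊢
  rw [hsplit, sum_coprime_eq_sum_divisors hN, sum_coprime_eq_sum_divisors hN,
    ← Finset.sum_sub_distrib, ← nsmul_one, ← Finset.sum_const]
  refine (Finset.abs_sum_le_sum_abs _ _).trans (Finset.sum_le_sum fun e _ => ?_)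
  have hmul : ∀ c, ∑ j ∈ Finset.Ioc 0 c, chiFour (e * j) =
      chiFour e * ∑ j ∈ Finset.Ioc 0 c, chiFour j := by
    intro c
    rw [Finset.mul_sum]
    refine Finset.sum_congr rfl fun j _ => ?_
    rw [chiFour_apply, chiFour_apply, chiFour_apply, Nat.cast_mul, map_mul, Int.cast_mul]
  rw [hmul, hmul, ← mul_sub, ← mul_sub, abs_mul, abs_mul]
  refine mul_le_one₀ (abs_moebius_cast_le_one e) (by positivity)
    (mul_le_one₀ (abs_chiFour_le_one e) (abs_nonneg _) ?_)
  have h1 := sum_chiFour_mem (b / e)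
  have h2 := sum_chiFour_mem (a / e)
  rw [abs_le]
  constructor <;> linarith

lemma abs_sum_div_le {f : ℕ → ℝ} {M : ℝ} {a b : ℕ} (hab : a ≤ b)
    (hf : ∀ c, a ≤ c → |∑ d ∈ Finset.Ioc a c, f d| ≤ M) :
    |∑ d ∈ Finset.Ioc a b, f d / d| ≤ M / (a + 1) := by
  have key : |∑ d ∈ Finset.Ioc a b, f d / d - (∑ d ∈ Finset.Ioc a b, f d) / (b + 1)| ≤
      M / (a + 1) - M / (b + 1) := by
    induction b, hab using Nat.le_induction with
    | base => simp
    | succ b hab ih =>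
      rw [Finset.sum_Ioc_succ_top hab, Finset.sum_Ioc_succ_top hab]
      have h1 := hf (b + 1) (by omega)
      rw [Finset.sum_Ioc_succ_top hab] at h1
      set S := ∑ d ∈ Finset.Ioc a b, f d
      set D := ∑ d ∈ Finset.Ioc a b, f d / d
      push_cast
      have hb : (0 : ℝ) < b + 1 := by positivity
      have hb2 : (0 : ℝ) < b + 1 + 1 := by positivity
      have hw : 0 ≤ 1 / ((b : ℝ) + 1) - 1 / (b + 1 + 1) :=
        sub_nonneg.mpr (one_div_le_one_div_of_le hb (by linarith))
      have h2 : D + f (b + 1) / (b + 1) - (S + f (b + 1)) / (b + 1 + 1) =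
          (D - S / (b + 1)) + (S + f (b + 1)) * (1 / ((b : ℝ) + 1) - 1 / (b + 1 + 1)) := by
        field_simp; ring
      have h3 : M / (a + 1) - M / (b + 1 + 1) = (M / (a + 1) - M / (b + 1)) +
          M * (1 / ((b : ℝ) + 1) - 1 / (b + 1 + 1)) := by ring
      rw [h2, h3]
      refine (abs_add_le _ _).trans (add_le_add ih ?_)
      rw [abs_mul, abs_of_nonneg hw]
      exact mul_le_mul_of_nonneg_right h1 hw
  have h1 := hf b hab
  have hb : (0 : ℝ) < b + 1 := by positivity
  have h2 : |(∑ d ∈ Finset.Ioc a b, f d) / ((b : ℝ) + 1)| ≤ M / (b + 1) := by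
    rw [abs_div, abs_of_pos hb]
    exact div_le_div_of_nonneg_right h1 hb.le
  rw [abs_le] at *
  constructor <;> linarith

/-- The coefficient of the main term for the summatory function of the convolution of the
trivial character and `χ₄` restricted to the integers coprime to `N`. -/
noncomputable def meanCoeff (N n : ℕ) : ℝ :=
  coprimeDensity N * ∑ d ∈ Finset.Ioc 0 n, coprimePart N chiFour d / d

lemma sum_Ioc_mul_hyperbola (f g : ArithmeticFunction ℝ) (Y : ℕ) :
    ∑ m ∈ Finset.Ioc 0 Y, (f * g) m =
      ∑ d ∈ Finset.Ioc 0 Y.sqrt, g d * ∑ k ∈ Finset.Ioc 0 (Y / d), f k +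
      ∑ k ∈ Finset.Ioc 0 Y.sqrt, f k * ∑ d ∈ Finset.Ioc Y.sqrt (Y / k), g d := by
  rw [mul_comm, sum_Ioc_mul_eq_sum_sum,
    ← Finset.sum_Ioc_consecutive _ (Nat.zero_le _) (Nat.sqrt_le_self Y)]
  congr 1
  simp only [Finset.mul_sum]
  rw [Finset.sum_comm' (t' := Finset.Ioc 0 Y.sqrt) (s' := fun k => Finset.Ioc Y.sqrt (Y / k))]
  · exact Finset.sum_congr rfl fun k _ => Finset.sum_congr rfl fun d _ => mul_comm _ _
  · intro d k
    simp only [Finset.mem_Ioc]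
    constructor
    · rintro ⟨⟨h1, h2⟩, h3, h4⟩
      rw [Nat.le_div_iff_mul_le (by omega)] at h4
      rw [Nat.le_div_iff_mul_le h3]
      have := Nat.lt_succ_sqrt Y
      refine ⟨⟨h1, by rwa [mul_comm]⟩, h3, ?_⟩
      by_contra hcon
      have : (Y.sqrt + 1) * (Y.sqrt + 1) ≤ k * d := Nat.mul_le_mul (by omega) (by omega)
      simp only [Nat.succ_eq_add_one] at *
      omega
    · rintro ⟨⟨h1, h2⟩, h3, h4⟩
      rw [Nat.le_div_iff_mul_le h3] at h2
      rw [Nat.le_div_iff_mul_le (by omega)]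
      refine ⟨⟨h1, ?_⟩, h3, by rwa [mul_comm]⟩
      exact (Nat.le_mul_of_pos_right d h3).trans h2

lemma abs_sum_mul_sub_meanCoeff_le {N : ℕ} (hN : N ≠ 0) {n Y : ℕ} (hY : Y ≤ n) {y : ℝ}
    (h1 : (Y : ℝ) ≤ y) (h2 : y < Y + 1) :
    |∑ m ∈ Finset.Ioc 0 Y, (coprimePart N zeta * coprimePart N chiFour) m - meanCoeff N n * y| ≤
      4 * (N.divisors.card : ℝ) ^ 2 * √y := by
  rw [sum_Ioc_mul_hyperbola]
  set τ : ℝ := (N.divisors.card : ℝ) with hτ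
  have hτ1 : 1 ≤ τ := by
    rw [hτ]; exact_mod_cast Finset.card_pos.mpr (Nat.nonempty_divisors.mpr hN)
  set T := Y.sqrt with hT
  have hy0 : 0 ≤ y := (Nat.cast_nonneg Y).trans h1
  have hTy : (T : ℝ) ≤ √y := by
    refine Real.le_sqrt_of_sq_le (le_trans ?_ h1)
    exact_mod_cast Nat.sqrt_le' Y
  have hyT : √y ≤ T + 1 := by
    rw [Real.sqrt_le_left (by positivity)]
    have : (Y : ℝ) + 1 ≤ (T + 1) ^ 2 := by exact_mod_cast Nat.succ_le_succ_sqrt' Y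
    linarith
  have hTn : T ≤ n := (Nat.sqrt_le_self Y).trans hY
  have hchi : ∀ d, |coprimePart N chiFour d| ≤ 1 := by
    intro d
    rw [coprimePart_apply]
    split_ifs
    · exact abs_chiFour_le_one d
    · simp
  have hone : ∀ d, |coprimePart N zeta d| ≤ 1 := by
    intro d
    rw [coprimePart_apply, natCoe_apply, zeta_apply]
    split_ifs <;> simp
  set κ := coprimeDensity N with hκ
  set χ := coprimePart N chiFour with hχ
  have hA : |∑ d ∈ Finset.Ioc 0 T, χ d * ∑ k ∈ Finset.Ioc 0 (Y / d), coprimePart N zeta k -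
      κ * y * ∑ d ∈ Finset.Ioc 0 T, χ d / d| ≤ T * τ := by
    rw [Finset.mul_sum, ← Finset.sum_sub_distrib]
    have : (T : ℝ) * τ = ∑ d ∈ Finset.Ioc 0 T, τ := by simp
    rw [this]
    refine (Finset.abs_sum_le_sum_abs _ _).trans (Finset.sum_le_sum fun d hd => ?_)
    have hd0 : 0 < d := (Finset.mem_Ioc.mp hd).1
    have hd1 : (0 : ℝ) < d := by exact_mod_cast hd0
    rw [show χ d * ∑ k ∈ Finset.Ioc 0 (Y / d), coprimePart N zeta k - κ * y * (χ d / d) =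
      χ d * (∑ k ∈ Finset.Ioc 0 (Y / d), coprimePart N zeta k - κ * (y / d)) by ring, abs_mul]
    refine (mul_le_of_le_one_left (abs_nonneg _) (hchi d)).trans ?_
    refine abs_sum_coprimePart_zeta_sub_le hN ?_ ?_
    · rw [le_div_iff₀ hd1]
      refine le_trans ?_ h1
      exact_mod_cast Nat.div_mul_le_self Y d
    · rw [div_lt_iff₀ hd1]
      have h4 : (Y : ℝ) + 1 ≤ d * ((Y / d : ℕ) + 1) := by
        exact_mod_cast Nat.lt_mul_div_succ Y hd0
      linarith
  have hB : |∑ k ∈ Finset.Ioc 0 T, coprimePart N zeta k * ∑ d ∈ Finset.Ioc T (Y / k), χ d| ≤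
      T * τ := by
    have : (T : ℝ) * τ = ∑ d ∈ Finset.Ioc 0 T, τ := by simp
    rw [this]
    refine (Finset.abs_sum_le_sum_abs _ _).trans (Finset.sum_le_sum fun k _ => ?_)
    rw [abs_mul]
    refine (mul_le_of_le_one_left (abs_nonneg _) (hone k)).trans ?_
    rcases le_total T (Y / k) with h | h
    · exact abs_sum_coprimePart_chiFour_le hN h
    · rw [Finset.Ioc_eq_empty (by omega)]; simp; linarith
  have hC : |∑ d ∈ Finset.Ioc T n, χ d / d| ≤ τ / (T + 1) :=
    abs_sum_div_le hTn fun c hc => abs_sum_coprimePart_chiFour_le hN hc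
  have hκτ : |κ| ≤ τ := abs_coprimeDensity_le N
  have hmean : meanCoeff N n * y = κ * y * ∑ d ∈ Finset.Ioc 0 T, χ d / d +
      κ * y * ∑ d ∈ Finset.Ioc T n, χ d / d := by
    rw [meanCoeff, ← Finset.sum_Ioc_consecutive _ (Nat.zero_le T) hTn]; ring
  have hD : |κ * y * ∑ d ∈ Finset.Ioc T n, χ d / d| ≤ τ ^ 2 * √y := by
    rw [abs_mul, abs_mul, abs_of_nonneg hy0]
    calc |κ| * y * |∑ d ∈ Finset.Ioc T n, χ d / d| ≤ τ * y * (τ / (T + 1)) := by gcongr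
      _ = τ ^ 2 * (y / (T + 1)) := by ring
      _ ≤ τ ^ 2 * √y := by
        gcongr
        rw [div_le_iff₀ (by positivity)]
        calc y = √y * √y := (Real.mul_self_sqrt hy0).symm
          _ ≤ √y * (T + 1) := by gcongr
  have hE : (T : ℝ) * τ ≤ τ ^ 2 * √y := by
    calc (T : ℝ) * τ ≤ √y * (τ * τ) := by gcongr; nlinarith
      _ = τ ^ 2 * √y := by ring
  rw [hmean]
  rw [abs_le] at *
  constructor <;> nlinarith [Real.sqrt_nonneg y, sq_nonneg τ, mul_nonneg (sq_nonneg τ) (Real.sqrt_nonneg y)]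

end ArithmeticFunction

lemma isPrimRoot_one_iff {A H : ℕ} : IsPrimRoot 1 A H ↔ A ∣ H ^ 2 + 1 := by
  refine ⟨fun h => by simpa using h.1, fun h => ⟨by simpa using h, fun p hp hpA hpH hd => ?_⟩⟩
  have h1 : p ∣ H ^ 2 + 1 := hpA.trans h
  have h2 : ¬ p ∣ H := fun h2 =>
    hp.one_lt.ne' (Nat.dvd_one.mp ((Nat.dvd_add_right (dvd_pow h2 two_ne_zero)).mp h1))
  obtain rfl : p = 2 :=
    (Nat.prime_dvd_prime_iff_eq hp Nat.prime_two).mp ((hp.dvd_mul.mp hpH).resolve_right h2)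
  have h3 : 2 * 2 ∣ H ^ 2 + 1 := (mul_dvd_mul_left 2 hpA).trans (by simpa using hd)
  obtain ⟨c, rfl⟩ : Odd H := Nat.odd_iff.mpr (by omega)
  obtain ⟨d, hd⟩ := h3
  ring_nf at hd
  omega

/-- Coprime pairs in a box inject into the roots of `H² + 1`. -/
lemma card_coprime_pairs_le {K n : ℕ} (hK : 2 * K ^ 2 ≤ n) :
    (((Finset.Ioc 0 K) ×ˢ (Finset.Ioc 0 K)).filter fun x => x.1.Coprime x.2).card ≤
      ∑ A ∈ Finset.Ioc 0 n, primRootCount 1 A := by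
  classical
  simp only [primRootCount]
  rw [← Finset.card_sigma]
  have hex : ∀ x : ℕ × ℕ, ∃ H, x.1.Coprime x.2 → 0 < x.1 →
      H < x.1 ^ 2 + x.2 ^ 2 ∧ H * x.2 ≡ x.1 [MOD x.1 ^ 2 + x.2 ^ 2] := by
    intro x
    by_cases hx : x.1.Coprime x.2 ∧ 0 < x.1
    · obtain ⟨hc, h0⟩ := hx
      have hcop : x.2.Coprime (x.1 ^ 2 + x.2 ^ 2) := by
        rw [pow_two x.2, Nat.coprime_add_mul_left_right]
        exact (hc.pow_left 2).symm
      obtain ⟨m, hm, hm'⟩ := Nat.exists_mul_mod_eq_of_coprime x.1 hcop (by positivity)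
      exact ⟨m, fun _ _ => ⟨hm, by rw [mul_comm]; exact hm'⟩⟩
    · exact ⟨0, fun h1 h2 => absurd ⟨h1, h2⟩ hx⟩
  choose h hh using hex
  refine Finset.card_le_card_of_injOn
    (fun x => (⟨x.1 ^ 2 + x.2 ^ 2, h x⟩ : Σ _ : ℕ, ℕ)) ?_ ?_
  · rintro ⟨u, v⟩ hx
    simp only [Finset.coe_filter, Finset.mem_product, Finset.mem_Ioc, Set.mem_ofPred_eq,
      Finset.coe_sigma, Set.mem_sigma_iff, Finset.coe_Ioc, Set.mem_Ioc, Finset.mem_range] at hx ⊢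
    obtain ⟨⟨⟨hu0, huK⟩, hv0, hvK⟩, hc⟩ := hx
    obtain ⟨h1, h2⟩ := hh (u, v) hc hu0
    simp only at h1 h2
    refine ⟨⟨by positivity, ?_⟩, h1, isPrimRoot_one_iff.mpr ?_⟩
    · have := Nat.pow_le_pow_left huK 2
      have := Nat.pow_le_pow_left hvK 2
      omega
    · have hcop : (u ^ 2 + v ^ 2).Coprime (v ^ 2) := by
        rw [Nat.coprime_add_self_left]
        exact (hc.pow_left 2).pow_right 2
      refine hcop.dvd_of_dvd_mul_right ?_
      have h3 := ((h2.pow 2).add_right (v ^ 2)).symm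
      rw [show (h (u, v) ^ 2 + 1) * v ^ 2 = (h (u, v) * v) ^ 2 + v ^ 2 by ring]
      exact (Nat.modEq_zero_iff_dvd.mp (h3.symm.trans (Nat.modEq_zero_iff_dvd.mpr dvd_rfl)))
  · rintro ⟨u, v⟩ hx ⟨u', v'⟩ hx' heq
    simp only [Finset.coe_filter, Finset.mem_product, Finset.mem_Ioc, Set.mem_ofPred_eq,
      Sigma.mk.injEq, heq_eq_eq] at hx hx' heq
    obtain ⟨⟨⟨hu0, -⟩, hv0, -⟩, hc⟩ := hx
    obtain ⟨⟨⟨hu0', -⟩, hv0', -⟩, hc'⟩ := hx'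
    obtain ⟨hA, hH⟩ := heq
    obtain ⟨-, h2⟩ := hh (u, v) hc hu0
    obtain ⟨-, h2'⟩ := hh (u', v') hc' hu0'
    simp only at h2 h2'
    rw [← hH, ← hA] at h2'
    set A := u ^ 2 + v ^ 2 with hAdef
    have hdvd : A ∣ u * u' + v * v' := by
      have hcop : A.Coprime (v ^ 2) := by
        rw [hAdef, Nat.coprime_add_self_left]
        exact (hc.pow_left 2).pow_right 2
      have h3 : A ∣ h (u, v) ^ 2 + 1 := by
        refine hcop.dvd_of_dvd_mul_right ?_
        have h3 := ((h2.pow 2).add_right (v ^ 2))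
        rw [show (h (u, v) ^ 2 + 1) * v ^ 2 = (h (u, v) * v) ^ 2 + v ^ 2 by ring]
        exact (Nat.modEq_zero_iff_dvd.mp (h3.trans (Nat.modEq_zero_iff_dvd.mpr dvd_rfl)))
      have h4 := ((h2.mul h2').add_right (v * v')).symm
      rw [show h (u, v) * v * (h (u, v) * v') + v * v' = (h (u, v) ^ 2 + 1) * (v * v') by ring] at h4
      exact Nat.modEq_zero_iff_dvd.mp (h4.trans (Nat.modEq_zero_iff_dvd.mpr (h3.mul_right _)))
    have hle := Nat.le_of_dvd (by positivity) hdvd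
    zify at hle hA hAdef
    have hs : ((u : ℤ) - u') ^ 2 + ((v : ℤ) - v') ^ 2 ≤ 0 := by nlinarith
    have h5 : (u : ℤ) - u' = 0 := by
      have : ((u : ℤ) - u') ^ 2 ≤ 0 := by nlinarith [sq_nonneg ((v : ℤ) - v')]
      exact pow_eq_zero_iff two_ne_zero |>.mp (le_antisymm this (sq_nonneg _))
    have h6 : (v : ℤ) - v' = 0 := by
      have : ((v : ℤ) - v') ^ 2 ≤ 0 := by nlinarith [sq_nonneg ((u : ℤ) - u')]
      exact pow_eq_zero_iff two_ne_zero |>.mp (le_antisymm this (sq_nonneg _))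
    ext <;> simp only <;> omega

lemma sq_le_four_mul_card_coprime_pairs (K : ℕ) :
    K ^ 2 ≤ 4 * (((Finset.Ioc 0 K) ×ˢ (Finset.Ioc 0 K)).filter fun x => x.1.Coprime x.2).card := by
  classical
  rcases lt_or_ge K 2 with hK | hK
  · interval_cases K <;> decide
  set P := (Finset.Ioc 0 K) ×ˢ (Finset.Ioc 0 K) with hP
  have hcardP : P.card = K ^ 2 := by simp [hP, pow_two]
  have hsub : (P.filter fun x => ¬ x.1.Coprime x.2) ⊆
      (Finset.Ioc 1 K).biUnion fun g =>
        ((Finset.Ioc 0 K).filter (g ∣ ·)) ×ˢ ((Finset.Ioc 0 K).filter (g ∣ ·)) := by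
    rintro ⟨u, v⟩ hx
    simp only [hP, Finset.mem_filter, Finset.mem_product, Finset.mem_Ioc, Finset.mem_biUnion] at hx ⊢
    obtain ⟨⟨⟨hu0, huK⟩, hv0, hvK⟩, hc⟩ := hx
    have hg0 : 0 < u.gcd v := Nat.gcd_pos_of_pos_left v hu0
    have hg1 : u.gcd v ≠ 1 := hc
    have hgu := Nat.gcd_dvd_left u v
    refine ⟨u.gcd v, ⟨by omega, (Nat.le_of_dvd hu0 hgu).trans huK⟩, ⟨⟨hu0, huK⟩, hgu⟩,
      ⟨hv0, hvK⟩, Nat.gcd_dvd_right u v⟩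
  have hle : ((P.filter fun x => ¬ x.1.Coprime x.2).card : ℝ) ≤
      ∑ g ∈ Finset.Ioc 1 K, (K : ℝ) ^ 2 * ((g : ℝ) ^ 2)⁻¹ := by
    calc ((P.filter fun x => ¬ x.1.Coprime x.2).card : ℝ)
        ≤ ((∑ g ∈ Finset.Ioc 1 K, (K / g) * (K / g) : ℕ) : ℝ) := by
          refine Nat.cast_le.mpr ((Finset.card_le_card hsub).trans (Finset.card_biUnion_le.trans ?_))
          refine Finset.sum_le_sum fun g _ => ?_
          rw [Finset.card_product, Nat.Ioc_filter_dvd_card_eq_div]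
      _ ≤ _ := by
          push_cast
          refine Finset.sum_le_sum fun g _ => ?_
          have h := Nat.cast_div_le (α := ℝ) (m := K) (n := g)
          calc ((K / g : ℕ) : ℝ) * (K / g : ℕ) ≤ (K / g) * (K / g) := by gcongr
            _ = (K : ℝ) ^ 2 * ((g : ℝ) ^ 2)⁻¹ := by
              rw [div_mul_div_comm, ← pow_two, ← pow_two, div_eq_mul_inv]
  have hsum : ∑ g ∈ Finset.Ioc 1 K, ((g : ℝ) ^ 2)⁻¹ ≤ 3 / 4 := by
    rw [← Finset.sum_Ioc_consecutive _ one_le_two hK]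
    have h1 := sum_Ioc_inv_sq_le_sub (α := ℝ) two_ne_zero hK
    have h2 : (0 : ℝ) ≤ (K : ℝ)⁻¹ := by positivity
    have h3 : ∑ g ∈ Finset.Ioc (1 : ℕ) 2, ((g : ℝ) ^ 2)⁻¹ = 1 / 4 := by
      rw [Finset.sum_Ioc_succ_top le_rfl]; norm_num
    rw [h3]
    push_cast at h1
    linarith
  rw [← Finset.mul_sum] at hle
  have hsplit := Finset.card_filter_add_card_filter_not (s := P) (fun x => x.1.Coprime x.2)
  rw [hcardP] at hsplit
  have h4 : (K : ℝ) ^ 2 * ∑ g ∈ Finset.Ioc 1 K, ((g : ℝ) ^ 2)⁻¹ ≤ (K : ℝ) ^ 2 * (3 / 4) := by gcongr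
  have h5 : ((P.filter fun x => x.1.Coprime x.2).card : ℝ) +
      ((P.filter fun x => ¬ x.1.Coprime x.2).card : ℝ) = (K : ℝ) ^ 2 := by exact_mod_cast hsplit
  have h6 : (K : ℝ) ^ 2 ≤ 4 * ((P.filter fun x => x.1.Coprime x.2).card : ℝ) := by linarith
  exact_mod_cast h6

lemma le_sum_primRootCount_one {n : ℕ} (hn : 2 ≤ n) :
    n ≤ 32 * ∑ A ∈ Finset.Ioc 0 n, primRootCount 1 A := by
  set K := (n / 2).sqrt with hK
  have h1 : 2 * K ^ 2 ≤ n := by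
    have := Nat.sqrt_le' (n / 2)
    rw [← hK] at this
    omega
  have hK1 : 1 ≤ K := Nat.le_sqrt.mpr (by omega)
  have h2 : n / 2 < (K + 1) ^ 2 := Nat.lt_succ_sqrt' (n / 2)
  have h3 : n ≤ 8 * K ^ 2 := by
    have : (K + 1) ^ 2 ≤ (2 * K) ^ 2 := Nat.pow_le_pow_left (by omega) 2
    rw [mul_pow] at this
    omega
  have h4 := card_coprime_pairs_le h1
  have h5 := sq_le_four_mul_card_coprime_pairs K
  omega

/-- A sequence growing slower than every positive power. -/
def IsSubpoly (f : ℕ → ℝ) : Prop :=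
  ∀ ε : ℝ, 0 < ε → f =O[Filter.atTop] fun n : ℕ => (n : ℝ) ^ ε

namespace IsSubpoly

lemma const (c : ℝ) : IsSubpoly fun _ => c := by
  intro ε hε
  refine Asymptotics.IsBigO.of_bound |c| ?_
  filter_upwards [Filter.eventually_ge_atTop 1] with n hn
  have h1 : (1 : ℝ) ≤ (n : ℝ) ^ ε := Real.one_le_rpow (by exact_mod_cast hn) hε.le
  rw [Real.norm_eq_abs, Real.norm_eq_abs, abs_of_nonneg (by linarith : (0 : ℝ) ≤ (n : ℝ) ^ ε)]
  exact le_mul_of_one_le_right (abs_nonneg c) h1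

lemma mul {f g : ℕ → ℝ} (hf : IsSubpoly f) (hg : IsSubpoly g) :
    IsSubpoly fun n => f n * g n := by
  intro ε hε
  refine ((hf (ε / 2) (by positivity)).mul (hg (ε / 2) (by positivity))).congr_right fun n => ?_
  rw [← Real.rpow_add_of_nonneg (Nat.cast_nonneg n) (by positivity) (by positivity), add_halves]

lemma add {f g : ℕ → ℝ} (hf : IsSubpoly f) (hg : IsSubpoly g) :
    IsSubpoly fun n => f n + g n := fun ε hε => (hf ε hε).add (hg ε hε)

/-- To show that a nonnegative sequence is subpolynomial it is enough to bound it
by `C n ^ (k ε)`, for a fixed `k`. -/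
lemma of_le {f : ℕ → ℝ} (k : ℝ) (hk : 0 < k)
    (h : ∀ ε : ℝ, 0 < ε → ∃ C : ℝ, ∀ n : ℕ, 1 ≤ n → |f n| ≤ C * (n : ℝ) ^ (k * ε)) :
    IsSubpoly f := by
  intro ε hε
  obtain ⟨C, hC⟩ := h (ε / k) (by positivity)
  refine Asymptotics.IsBigO.of_bound C ?_
  filter_upwards [Filter.eventually_ge_atTop 1] with n hn
  rw [Real.norm_eq_abs, Real.norm_eq_abs, abs_of_nonneg (Real.rpow_nonneg (Nat.cast_nonneg n) _)]
  have := hC n hn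
  rwa [mul_div_cancel₀ ε hk.ne'] at this

lemma tendsto_div {f : ℕ → ℝ} (hf : IsSubpoly f) {δ : ℝ} (hδ : 0 < δ) :
    Filter.Tendsto (fun n : ℕ => f n / (n : ℝ) ^ δ) Filter.atTop (nhds 0) := by
  refine ((hf (δ / 2) (by positivity)).mul
    (Asymptotics.isBigO_refl (fun n : ℕ => ((n : ℝ) ^ δ)⁻¹) Filter.atTop)).trans_tendsto ?_
  refine ((tendsto_rpow_neg_atTop (half_pos hδ)).comp tendsto_natCast_atTop_atTop).congr' ?_
  filter_upwards [Filter.eventually_gt_atTop 0] with n hn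
  have hn' : (0 : ℝ) < n := by exact_mod_cast hn
  rw [Function.comp_apply, ← Real.rpow_neg hn'.le, ← Real.rpow_add hn']
  congr 1
  ring

end IsSubpoly

lemma isSubpoly_card_divisors_two_mul : IsSubpoly fun n => ((2 * n).divisors.card : ℝ) := by
  refine .of_le 1 one_pos fun ε hε => ?_
  obtain ⟨C, hC, h⟩ := card_divisors_le_rpow hε
  refine ⟨C * 2 ^ ε, fun n hn => ?_⟩
  rw [Nat.abs_cast, one_mul]
  refine (h (2 * n) (by omega)).trans_eq ?_
  push_cast
  rw [Real.mul_rpow (by norm_num) (Nat.cast_nonneg n)]; ring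

lemma isSubpoly_card_divisors_sq : IsSubpoly fun n => ((4 * n ^ 2).divisors.card : ℝ) := by
  refine .of_le 2 two_pos fun ε hε => ?_
  obtain ⟨C, hC, h⟩ := card_divisors_le_rpow hε
  refine ⟨C * 4 ^ ε, fun n hn => ?_⟩
  rw [Nat.abs_cast]
  refine (h (4 * n ^ 2) (by positivity)).trans_eq ?_
  push_cast
  rw [Real.mul_rpow (by norm_num) (by positivity), ← Real.rpow_natCast_mul (Nat.cast_nonneg n)]
  push_cast; ring

/-- The number of integers up to `n` composed of primes dividing `2n`. -/
def smoothCount (n : ℕ) : ℕ :=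
  ((Finset.Ioc 0 n).filter fun m => m.primeFactors ⊆ (2 * n).primeFactors).card

/-- The maximal number of divisors of an integer up to `n`. -/
def maxDivisors (n : ℕ) : ℕ := (Finset.Ioc 0 n).sup fun m => m.divisors.card

lemma card_divisors_le_maxDivisors {m n : ℕ} (h0 : 0 < m) (h : m ≤ n) :
    m.divisors.card ≤ maxDivisors n :=
  Finset.le_sup (f := fun m : ℕ => m.divisors.card) (Finset.mem_Ioc.mpr ⟨h0, h⟩)

lemma isSubpoly_smoothCount : IsSubpoly fun n => (smoothCount n : ℝ) := by
  refine .of_le 2 two_pos fun ε hε => ?_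
  obtain ⟨C, hC, h⟩ := card_primeFactors_subset_le hε
  refine ⟨C * 2 ^ ε, fun n hn => ?_⟩
  rw [Nat.abs_cast]
  refine (h (2 * n) (by omega) n).trans_eq ?_
  push_cast
  rw [Real.mul_rpow (by norm_num) (Nat.cast_nonneg n), two_mul ε,
    Real.rpow_add_of_nonneg (Nat.cast_nonneg n) hε.le hε.le]; ring

lemma isSubpoly_maxDivisors : IsSubpoly fun n => (maxDivisors n : ℝ) := by
  refine .of_le 1 one_pos fun ε hε => ?_
  obtain ⟨C, hC, h⟩ := card_divisors_le_rpow hε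
  refine ⟨C, fun n hn => ?_⟩
  rw [Nat.abs_cast, one_mul]
  obtain ⟨m, hm, hmn⟩ := Finset.exists_mem_eq_sup (Finset.Ioc 0 n)
    ⟨1, Finset.mem_Ioc.mpr ⟨one_pos, hn⟩⟩ (fun m : ℕ => m.divisors.card)
  rw [Finset.mem_Ioc] at hm
  rw [maxDivisors, hmn]
  refine (h m (by omega)).trans ?_
  have : (m : ℝ) ≤ n := by exact_mod_cast hm.2
  gcongr

lemma isSubpoly_one_add_log : IsSubpoly fun n => 1 + Real.log n := by
  refine (IsSubpoly.const 1).add (.of_le 1 one_pos fun ε hε => ⟨1 / ε, fun n hn => ?_⟩)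
  rw [abs_of_nonneg (Real.log_natCast_nonneg n), one_mul]
  exact (Real.log_natCast_le_rpow_div n hε).trans_eq (by ring)

section RootSum

open ArithmeticFunction

lemma abs_smoothPart_rootFun_le {n m : ℕ} (hm : m ≠ 0) :
    |smoothPart (2 * n) (rootFun n) m| ≤
      (if m.primeFactors ⊆ (2 * n).primeFactors then (m.divisors.card : ℝ) else 0) * √m := by
  rw [smoothPart_apply]
  split_ifs
  · rw [rootFun_apply, Nat.abs_cast]
    calc (primRootCount n m : ℝ) ≤ ((m.divisors.card * m.sqrt : ℕ) : ℝ) :=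
          Nat.cast_le.mpr (primRootCount_le_sqrt hm)
      _ ≤ m.divisors.card * √m := by
          push_cast; gcongr; exact Real.nat_sqrt_le_real_sqrt
  · simp

lemma sum_squareMoebius_div_sqrt_le (N n : ℕ) :
    ∑ j ∈ Finset.Ioc 0 n, |coprimePart N squareMoebius j| / √j ≤ 1 + Real.log n := by
  classical
  have h1 : ∀ j, |coprimePart N squareMoebius j| / √j ≤ if IsSquare j then 1 / √j else 0 := by
    intro j
    rw [coprimePart_apply, squareMoebius_apply]
    by_cases hj : IsSquare j
    · rw [if_pos hj, if_pos hj]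
      gcongr
      split_ifs
      · exact abs_moebius_cast_le_one _
      · simp
    · simp [hj]
  refine (Finset.sum_le_sum fun j _ => h1 j).trans ?_
  refine le_trans ?_ (harmonic_le_one_add_log n)
  rw [← Finset.sum_filter, harmonic_eq_sum_Icc]
  push_cast
  have hinj : Set.InjOn (fun g : ℕ => g * g) (Finset.Ioc 0 n) := by
    intro a _ b _ hab
    exact Nat.mul_self_inj.mp hab
  calc ∑ j ∈ (Finset.Ioc 0 n).filter IsSquare, 1 / √(j : ℝ)
      ≤ ∑ j ∈ (Finset.Ioc 0 n).image (fun g : ℕ => g * g), 1 / √((j : ℕ) : ℝ) := by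
        refine Finset.sum_le_sum_of_subset_of_nonneg ?_ fun _ _ _ => by positivity
        intro j hj
        rw [Finset.mem_filter, Finset.mem_Ioc] at hj
        obtain ⟨⟨h0, hn⟩, g, rfl⟩ := hj
        refine Finset.mem_image_of_mem _ (Finset.mem_Ioc.mpr ?_)
        have hg : 0 < g := Nat.pos_of_mul_pos_left h0
        exact ⟨hg, (Nat.le_mul_of_pos_left g hg).trans hn⟩
    _ = ∑ i ∈ Finset.Icc 1 n, ((i : ℝ))⁻¹ := by
        rw [Finset.sum_image hinj]
        refine Finset.sum_congr rfl fun g _ => ?_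
        push_cast
        rw [Real.sqrt_mul_self (Nat.cast_nonneg g), one_div]

lemma sum_smoothPart_div_sqrt_le (n : ℕ) :
    ∑ m ∈ Finset.Ioc 0 n, |smoothPart (2 * n) (rootFun n) m| / √m ≤
      smoothCount n * maxDivisors n := by
  rw [smoothCount, ← nsmul_eq_mul, ← Finset.sum_const, Finset.sum_filter]
  refine Finset.sum_le_sum fun m hm => ?_
  rw [Finset.mem_Ioc] at hm
  have hm0 : (0 : ℝ) < √m := Real.sqrt_pos.mpr (by exact_mod_cast hm.1)
  rw [div_le_iff₀ hm0]
  refine (abs_smoothPart_rootFun_le (by omega)).trans ?_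
  gcongr
  split_ifs
  · exact Nat.cast_le.mpr (card_divisors_le_maxDivisors hm.1 hm.2)
  · exact le_rfl

lemma sum_weight_div_sqrt_le (n : ℕ) :
    ∑ k ∈ Finset.Ioc 0 n,
      |(smoothPart (2 * n) (rootFun n) * coprimePart (2 * n) squareMoebius) k| / √k ≤
      smoothCount n * maxDivisors n * (1 + Real.log n) := by
  let a : ArithmeticFunction ℝ := ⟨fun m => |smoothPart (2 * n) (rootFun n) m| / √m, by simp⟩
  let b : ArithmeticFunction ℝ := ⟨fun m => |coprimePart (2 * n) squareMoebius m| / √m, by simp⟩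
  have ha : ∀ m, a m = |smoothPart (2 * n) (rootFun n) m| / √m := fun _ => rfl
  have hb : ∀ m, b m = |coprimePart (2 * n) squareMoebius m| / √m := fun _ => rfl
  have ha0 : ∀ m, 0 ≤ a m := fun m => by rw [ha]; positivity
  have hb0 : ∀ m, 0 ≤ b m := fun m => by rw [hb]; positivity
  have hle : ∀ k,
      |(smoothPart (2 * n) (rootFun n) * coprimePart (2 * n) squareMoebius) k| / √k ≤
        (a * b) k := by
    intro k
    rw [ArithmeticFunction.mul_apply, ArithmeticFunction.mul_apply]
    refine (div_le_div_of_nonneg_right (Finset.abs_sum_le_sum_abs _ _)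
      (Real.sqrt_nonneg _)).trans_eq ?_
    rw [Finset.sum_div]
    refine Finset.sum_congr rfl fun x hx => ?_
    rw [ha, hb, ← (Nat.mem_divisorsAntidiagonal.mp hx).1, Nat.cast_mul,
      Real.sqrt_mul (Nat.cast_nonneg _), abs_mul, div_mul_div_comm]
  calc _ ≤ ∑ k ∈ Finset.Ioc 0 n, (a * b) k := Finset.sum_le_sum fun k _ => hle k
    _ = ∑ m ∈ Finset.Ioc 0 n, a m * ∑ j ∈ Finset.Ioc 0 (n / m), b j :=
        sum_Ioc_mul_eq_sum_sum a b n
    _ ≤ ∑ m ∈ Finset.Ioc 0 n, a m * (1 + Real.log n) := by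
        refine Finset.sum_le_sum fun m _ => mul_le_mul_of_nonneg_left ?_ (ha0 m)
        refine le_trans ?_ (sum_squareMoebius_div_sqrt_le (2 * n) n)
        exact Finset.sum_le_sum_of_subset_of_nonneg
          (Finset.Ioc_subset_Ioc_right (Nat.div_le_self n m)) fun j _ _ => hb0 j
    _ ≤ _ := by
        rw [← Finset.sum_mul]
        have : 0 ≤ Real.log n := Real.log_natCast_nonneg n
        gcongr
        exact sum_smoothPart_div_sqrt_le n

/-- The summatory function of `primRootCount`. -/
noncomputable def rootSum (n X : ℕ) : ℝ := ∑ A ∈ Finset.Ioc 0 X, (primRootCount n A : ℝ)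

/-- The error term in the asymptotics of `rootSum`, up to a factor `√n`. -/
noncomputable def rootErr (n : ℕ) : ℝ :=
  4 * ((2 * n).divisors.card : ℝ) ^ 2 * (smoothCount n * maxDivisors n * (1 + Real.log n))

lemma isSubpoly_rootErr : IsSubpoly rootErr := by
  have h := isSubpoly_card_divisors_two_mul
  have := ((IsSubpoly.const 4).mul (h.mul h)).mul
    ((isSubpoly_smoothCount.mul isSubpoly_maxDivisors).mul isSubpoly_one_add_log)
  refine fun ε hε => (this ε hε).congr_left fun n => ?_
  rw [rootErr, pow_two]

lemma exists_abs_rootSum_sub_le {n : ℕ} (hn : n ≠ 0) :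
    ∃ c : ℝ, ∀ X ≤ n, |rootSum n X - c * X| ≤ rootErr n * √n := by
  have hN : 2 * n ≠ 0 := by omega
  set w := smoothPart (2 * n) (rootFun n) * coprimePart (2 * n) squareMoebius with hw
  obtain ⟨τ, hτ⟩ : ∃ τ : ℝ, τ = ((2 * n).divisors.card : ℝ) := ⟨_, rfl⟩
  have hf : rootFun n = w * (coprimePart (2 * n) zeta * coprimePart (2 * n) chiFour) := by
    rw [hw, mul_assoc, ← coprimePart_rootFun dvd_rfl,
      smoothPart_mul_coprimePart (isMultiplicative_rootFun n) hN]
  refine ⟨meanCoeff (2 * n) n * ∑ k ∈ Finset.Ioc 0 n, w k / k, fun X hX => ?_⟩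
  have hF : rootSum n X = ∑ k ∈ Finset.Ioc 0 n, w k * ∑ m ∈ Finset.Ioc 0 (X / k),
      (coprimePart (2 * n) zeta * coprimePart (2 * n) chiFour) m := by
    calc rootSum n X = ∑ A ∈ Finset.Ioc 0 X, rootFun n A := rfl
      _ = _ := by rw [hf, sum_Ioc_mul_eq_sum_sum]
      _ = _ := by
        refine Finset.sum_subset (Finset.Ioc_subset_Ioc_right hX) fun k hk hkX => ?_
        rw [Finset.mem_Ioc] at hk hkX
        rw [Nat.div_eq_of_lt (by omega)]
        simp
  rw [hF, mul_assoc, Finset.sum_mul, Finset.mul_sum, ← Finset.sum_sub_distrib]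
  calc _ ≤ ∑ k ∈ Finset.Ioc 0 n, |w k| / √k * (4 * τ ^ 2 * √n) := by
        refine (Finset.abs_sum_le_sum_abs _ _).trans (Finset.sum_le_sum fun k hk => ?_)
        have hk0 : 0 < k := (Finset.mem_Ioc.mp hk).1
        have hk1 : (0 : ℝ) < k := by exact_mod_cast hk0
        have h := abs_sum_mul_sub_meanCoeff_le hN ((Nat.div_le_self X k).trans hX)
          (y := (X : ℝ) / k) ?_ ?_
        · rw [← hτ] at h
          rw [show ∀ R : ℝ, w k * R - meanCoeff (2 * n) n * (w k / k * X) =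
            w k * (R - meanCoeff (2 * n) n * (X / k)) by intro R; ring, abs_mul]
          calc _ ≤ |w k| * (4 * τ ^ 2 * √(X / k)) :=
              mul_le_mul_of_nonneg_left h (abs_nonneg _)
            _ ≤ |w k| * (4 * τ ^ 2 * √(n / k)) := by
              have : (X : ℝ) ≤ n := by exact_mod_cast hX
              gcongr
            _ = _ := by rw [Real.sqrt_div (Nat.cast_nonneg n)]; ring
        · rw [le_div_iff₀ hk1]
          exact_mod_cast Nat.div_mul_le_self X k
        · rw [div_lt_iff₀ hk1, mul_comm]
          exact_mod_cast Nat.lt_mul_div_succ X hk0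
    _ ≤ _ := by
        rw [← Finset.sum_mul, rootErr, ← hτ]
        calc _ ≤ (smoothCount n * maxDivisors n * (1 + Real.log n)) * (4 * τ ^ 2 * √n) :=
              mul_le_mul_of_nonneg_right (sum_weight_div_sqrt_le n) (by positivity)
          _ = _ := by ring

lemma le_mul_rootSum {n : ℕ} (hn : 2 ≤ n) :
    (n : ℝ) ≤ 64 * smoothCount n * maxDivisors n * rootSum n n := by
  have hN : 2 * n ≠ 0 := by omega
  have hcop : coprimePart (2 * n) (rootFun 1) = coprimePart (2 * n) (rootFun n) := by
    rw [coprimePart_rootFun dvd_rfl, coprimePart_rootFun (by omega)]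
  set G := coprimePart (2 * n) (rootFun n) with hG
  have hG0 : ∀ A, 0 ≤ G A := by
    intro A
    rw [hG, coprimePart_apply, rootFun_apply]
    split_ifs <;> positivity
  have hGle : ∑ A ∈ Finset.Ioc 0 n, G A ≤ rootSum n n := by
    refine Finset.sum_le_sum fun A _ => ?_
    rw [hG, coprimePart_apply, rootFun_apply]
    split_ifs
    · exact le_rfl
    · positivity
  have hS : ∑ A ∈ Finset.Ioc 0 n, rootFun 1 A ≤
      smoothCount n * (2 * maxDivisors n) * rootSum n n := by
    rw [← smoothPart_mul_coprimePart (isMultiplicative_rootFun 1) hN, sum_Ioc_mul_eq_sum_sum, hcop]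
    rw [smoothCount, ← nsmul_eq_mul, ← Finset.sum_const, Finset.sum_mul, Finset.sum_filter]
    refine Finset.sum_le_sum fun m hm => ?_
    rw [Finset.mem_Ioc] at hm
    rw [smoothPart_apply, rootFun_apply]
    split_ifs
    · have h1 : (primRootCount 1 m : ℝ) ≤ 2 * maxDivisors n := by
        have h2 := primRootCount_one_le (A := m) (by omega)
        have h3 := card_divisors_le_maxDivisors hm.1 hm.2
        have : primRootCount 1 m ≤ 2 * maxDivisors n := by omega
        exact_mod_cast this
      refine mul_le_mul h1 (le_trans ?_ hGle) (Finset.sum_nonneg fun A _ => hG0 A) (by positivity)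
      exact Finset.sum_le_sum_of_subset_of_nonneg
        (Finset.Ioc_subset_Ioc_right (Nat.div_le_self n m)) fun A _ _ => hG0 A
    · rw [zero_mul]
  have h1 : (n : ℝ) ≤ 32 * ∑ A ∈ Finset.Ioc 0 n, rootFun 1 A := by
    have h := le_sum_primRootCount_one hn
    simp only [rootFun_apply]
    exact_mod_cast h
  linarith

end RootSum

lemma IsPrimRoot.reflect {n H K : ℕ} (h : IsPrimRoot n (H + K) H) : IsPrimRoot n (H + K) K := by
  obtain ⟨h1, h2⟩ := h
  have key : K ^ 2 + n ^ 2 + 2 * H * (H + K) = H ^ 2 + n ^ 2 + (H + K) * (H + K) := by ring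
  refine ⟨?_, fun p hp hA hK hd => h2 p hp hA ?_ ?_⟩
  · rw [← Nat.dvd_add_left (Dvd.intro_left (2 * H) rfl), key]
    exact h1.add (Dvd.intro _ rfl)
  · have : p ∣ 2 * (H + K) := hA.mul_left 2
    rw [mul_add] at this
    exact (Nat.dvd_add_left hK).mp this
  · have hH : p ∣ 2 * H := by
      have : p ∣ 2 * (H + K) := hA.mul_left 2
      rw [mul_add] at this
      exact (Nat.dvd_add_left hK).mp this
    rw [← Nat.dvd_add_left (mul_dvd_mul_right hA (H + K)), ← key]
    exact hd.add (mul_dvd_mul_right hH _)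

open Classical in
/-- The residues counted by `primRootCount`, up to sign. -/
noncomputable def halfRoots (n A : ℕ) : Finset ℕ :=
  (Finset.range (A / 2 + 1)).filter fun H => IsPrimRoot n A H

lemma mem_halfRoots {n A H : ℕ} : H ∈ halfRoots n A ↔ 2 * H ≤ A ∧ IsPrimRoot n A H := by
  classical
  rw [halfRoots, Finset.mem_filter, Finset.mem_range]
  exact and_congr_left fun _ => by omega

lemma primRootCount_le_two_mul_card_halfRoots (n A : ℕ) :
    primRootCount n A ≤ 2 * (halfRoots n A).card := by
  classical
  rw [primRootCount, two_mul]
  refine (Finset.card_le_card (t := halfRoots n A ∪ (halfRoots n A).image fun H => A - H)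
    fun H hH => ?_).trans ((Finset.card_union_le _ _).trans
      (Nat.add_le_add_left Finset.card_image_le _))
  rw [Finset.mem_filter, Finset.mem_range] at hH
  rw [Finset.mem_union, Finset.mem_image]
  rcases Nat.lt_or_ge A (2 * H) with h | h
  · refine .inr ⟨A - H, mem_halfRoots.mpr ⟨by omega, ?_⟩, by omega⟩
    have : A = H + (A - H) := by omega
    rw [this] at hH
    have h3 := hH.2.reflect
    rwa [← this] at h3
  · exact .inl (mem_halfRoots.mpr ⟨h, hH.2⟩)

lemma two_mul_card_halfRoots_le {n A : ℕ} (hA : A ≠ 0) :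
    2 * (halfRoots n A).card ≤ primRootCount n A + if A ∣ 4 * n ^ 2 then 2 else 0 := by
  classical
  set M := (halfRoots n A).filter fun H => 0 < H ∧ 2 * H < A with hM
  have h1 : (halfRoots n A).card + M.card ≤ primRootCount n A := by
    have hinj : Set.InjOn (fun H => A - H) M := by
      intro a ha b hb hab
      simp only [hM, Finset.coe_filter, Set.mem_ofPred_eq] at ha hb hab
      omega
    rw [← Finset.card_image_of_injOn hinj, ← Finset.card_union_of_disjoint, primRootCount]
    · refine Finset.card_le_card fun H hH => ?_
      rw [Finset.mem_filter, Finset.mem_range]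
      rw [Finset.mem_union, Finset.mem_image] at hH
      rcases hH with hH | ⟨K, hK, rfl⟩
      · rw [mem_halfRoots] at hH
        exact ⟨by omega, hH.2⟩
      · rw [hM, Finset.mem_filter, mem_halfRoots] at hK
        obtain ⟨⟨_, h⟩, _, _⟩ := hK
        refine ⟨by omega, ?_⟩
        have : A = K + (A - K) := by omega
        rw [this] at h
        have h3 := h.reflect
        rwa [← this] at h3
    · rw [Finset.disjoint_left]
      intro H hH hH'
      obtain ⟨K, hK, rfl⟩ := Finset.mem_image.mp hH'
      rw [mem_halfRoots] at hH
      rw [hM, Finset.mem_filter] at hK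
      omega
  have h2 : (halfRoots n A).card ≤ M.card + if A ∣ 4 * n ^ 2 then 2 else 0 := by
    have hsub : halfRoots n A ⊆ M ∪ if A ∣ 4 * n ^ 2 then {0, A / 2} else ∅ := by
      intro H hH
      rw [Finset.mem_union]
      by_cases hc : 0 < H ∧ 2 * H < A
      · exact .inl (Finset.mem_filter.mpr ⟨hH, hc⟩)
      · right
        rw [mem_halfRoots] at hH
        have hd : A ∣ 4 * H ^ 2 := by
          rcases (by omega : H = 0 ∨ 2 * H = A) with rfl | h
          · simp
          · exact ⟨A, by rw [← h]; ring⟩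
        have hd' : A ∣ 4 * n ^ 2 := by
          rw [← Nat.dvd_add_right hd, ← mul_add]
          exact hH.2.1.mul_left 4
        rw [if_pos hd', Finset.mem_insert, Finset.mem_singleton]
        omega
    refine (Finset.card_le_card hsub).trans ((Finset.card_union_le _ _).trans ?_)
    gcongr
    split_ifs
    · exact Finset.card_le_two
    · simp
  omega

/-- Weighted counts of `halfRoots` are half the weighted counts of all roots, up to a
divisor-bounded error. -/
lemma abs_two_mul_sum_card_halfRoots_sub_le {n : ℕ} (hn : n ≠ 0) (s : Finset ℕ) (hs : 0 ∉ s) :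
    |2 * ∑ A ∈ s, ((halfRoots n A).card : ℝ) - ∑ A ∈ s, (primRootCount n A : ℝ)| ≤
      2 * (4 * n ^ 2).divisors.card := by
  rw [Finset.mul_sum, ← Finset.sum_sub_distrib]
  refine (Finset.abs_sum_le_sum_abs _ _).trans ?_
  calc _ ≤ ∑ A ∈ s, if A ∣ 4 * n ^ 2 then (2 : ℝ) else 0 := by
        refine Finset.sum_le_sum fun A hA => ?_
        have h0 : A ≠ 0 := fun h => hs (h ▸ hA)
        have h1 : (primRootCount n A : ℝ) ≤ 2 * (halfRoots n A).card := by
          exact_mod_cast primRootCount_le_two_mul_card_halfRoots n A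
        have h2 : 2 * ((halfRoots n A).card : ℝ) ≤
            primRootCount n A + if A ∣ 4 * n ^ 2 then 2 else 0 := by
          exact_mod_cast two_mul_card_halfRoots_le (n := n) h0
        rw [abs_of_nonneg (by linarith)]
        linarith
    _ = 2 * ((s.filter fun A => A ∣ 4 * n ^ 2).card : ℝ) := by
        rw [← Finset.sum_filter, Finset.sum_const, nsmul_eq_mul, mul_comm]
    _ ≤ _ := by
        gcongr
        intro A hA
        rw [Finset.mem_filter] at hA
        exact Nat.mem_divisors.mpr ⟨hA.2, by positivity⟩

lemma rootSum_nonneg (n X : ℕ) : 0 ≤ rootSum n X := Finset.sum_nonneg fun _ _ => Nat.cast_nonneg _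

/-- A deterministic comparison: approximate linearity of `F` on `[0, n]` forces the part of the
mass beyond `(1 - s) n` to be close to `s` times the total mass. -/
lemma abs_two_mul_sub_le {s n m c Fn Fm P T d E : ℝ} (hs0 : 0 ≤ s) (hs1 : s ≤ 1) (hn : 1 ≤ n)
    (hm1 : m ≤ (1 - s) * n) (hm2 : (1 - s) * n ≤ m + 1) (hFn0 : 0 ≤ Fn)
    (hFn : |Fn - c * n| ≤ E) (hFm : |Fm - c * m| ≤ E) (hT : |2 * T - Fn| ≤ d)
    (hP : |2 * P - (Fn - Fm)| ≤ d) :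
    |2 * P - s * (2 * T)| ≤ 3 * d + 3 * E + 2 * T / n := by
  have hd : 0 ≤ d := (abs_nonneg _).trans hT
  have hE : 0 ≤ E := (abs_nonneg _).trans hFn
  have hn0 : 0 < n := by linarith
  have hc : |c| ≤ d + E + 2 * T / n := by
    have h1 : |c| * n ≤ 2 * T + d + E := by
      nth_rewrite 1 [← abs_of_pos hn0]
      rw [← abs_mul]
      have h2 : c * n = Fn - (Fn - c * n) := by ring
      rw [h2]
      refine (abs_sub _ _).trans ?_
      rw [abs_of_nonneg hFn0]
      have := (abs_le.mp hT).1
      linarith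
    have h3 : (2 * T + d + E) ≤ (d + E + 2 * T / n) * n := by
      rw [add_mul, div_mul_cancel₀ _ hn0.ne']
      nlinarith
    exact le_of_mul_le_mul_right (h1.trans h3) hn0
  have h1 : |s * (2 * T - Fn)| ≤ d := by
    rw [abs_mul, abs_of_nonneg hs0]
    exact (mul_le_of_le_one_left (abs_nonneg _) hs1).trans hT
  have h2 : |(1 - s) * (Fn - c * n)| ≤ E := by
    rw [abs_mul, abs_of_nonneg (by linarith : 0 ≤ 1 - s)]
    exact (mul_le_of_le_one_left (abs_nonneg _) (by linarith)).trans hFn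
  have h3 : |c * ((1 - s) * n - m)| ≤ |c| := by
    rw [abs_mul]
    exact mul_le_of_le_one_right (abs_nonneg _) (abs_le.mpr ⟨by linarith, by linarith⟩)
  have key : 2 * P - s * (2 * T) = (2 * P - (Fn - Fm)) - s * (2 * T - Fn)
      + (1 - s) * (Fn - c * n) - (Fm - c * m) + c * ((1 - s) * n - m) := by ring
  have hP' := abs_le.mp hP
  have h1' := abs_le.mp h1
  have h2' := abs_le.mp h2
  have h3' := abs_le.mp (h3.trans hc)
  have hFm' := abs_le.mp hFm
  rw [key, abs_le]
  constructor <;> linarith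

lemma tendsto_sum_card_halfRoots_div (s : ℝ) (hs0 : 0 ≤ s) (hs1 : s ≤ 1) :
    Filter.Tendsto (fun n : ℕ =>
      (∑ A ∈ (Finset.Ioc 0 n).filter (fun A : ℕ => (n : ℝ) - A ≤ s * n),
        ((halfRoots n A).card : ℝ)) / ∑ A ∈ Finset.Ioc 0 n, ((halfRoots n A).card : ℝ))
      Filter.atTop (nhds s) := by
  have hSD := isSubpoly_smoothCount.mul isSubpoly_maxDivisors
  have hlim := ((((IsSubpoly.const 384).mul isSubpoly_card_divisors_sq).mul hSD).tendsto_div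
    (one_pos)).add ((((IsSubpoly.const 192).mul isSubpoly_rootErr).mul hSD).tendsto_div
    (one_half_pos)) |>.add ((IsSubpoly.const 1).tendsto_div one_pos)
  rw [add_zero, add_zero] at hlim
  rw [tendsto_iff_norm_sub_tendsto_zero]
  refine squeeze_zero' (.of_forall fun _ => norm_nonneg _) ?_ hlim
  filter_upwards [Filter.eventually_ge_atTop 2] with n hn
  have hn0 : n ≠ 0 := by omega
  have hnR : (1 : ℝ) ≤ n := by exact_mod_cast (by omega : 1 ≤ n)
  obtain ⟨c, hc⟩ := exists_abs_rootSum_sub_le hn0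
  obtain ⟨m, hm⟩ : ∃ m, m = ⌈(1 - s) * n⌉₊ - 1 := ⟨_, rfl⟩
  have hceil : ⌈(1 - s) * (n : ℝ)⌉₊ ≤ n := Nat.ceil_le.mpr (by nlinarith)
  have hmn : m ≤ n := by omega
  have hx0 : 0 ≤ (1 - s) * (n : ℝ) := mul_nonneg (by linarith) (by linarith)
  have hm1 : (m : ℝ) ≤ (1 - s) * n := by
    rcases Nat.eq_zero_or_pos ⌈(1 - s) * (n : ℝ)⌉₊ with h | h
    · rw [hm, h]; simpa using hx0
    · have h1 := Nat.ceil_lt_add_one hx0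
      have h2 : ((m + 1 : ℕ) : ℝ) = ⌈(1 - s) * (n : ℝ)⌉₊ := by
        rw [hm, Nat.sub_add_cancel h]
      push_cast at h2
      linarith
  have hm2 : (1 - s) * n ≤ (m : ℝ) + 1 := by
    refine (Nat.le_ceil _).trans ?_
    exact_mod_cast (by omega : ⌈(1 - s) * (n : ℝ)⌉₊ ≤ m + 1)
  have hfilter : (Finset.Ioc 0 n).filter (fun A : ℕ => (n : ℝ) - A ≤ s * n) =
      Finset.Ioc m n := by
    ext A
    rw [Finset.mem_filter, Finset.mem_Ioc, Finset.mem_Ioc]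
    have h1 : (n : ℝ) - A ≤ s * n ↔ ⌈(1 - s) * (n : ℝ)⌉₊ ≤ A := by
      rw [Nat.ceil_le]
      constructor <;> intro h <;> linarith
    rw [h1]
    omega
  rw [hfilter]
  have hT := abs_two_mul_sum_card_halfRoots_sub_le hn0 (Finset.Ioc 0 n) (by simp)
  have hP := abs_two_mul_sum_card_halfRoots_sub_le hn0 (Finset.Ioc m n) (by simp)
  have hsplit : ∑ A ∈ Finset.Ioc m n, (primRootCount n A : ℝ) = rootSum n n - rootSum n m := by
    rw [eq_sub_iff_add_eq, rootSum, rootSum, add_comm]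
    exact Finset.sum_Ioc_consecutive _ (Nat.zero_le m) hmn
  rw [hsplit] at hP
  change |_ - rootSum n n| ≤ _ at hT
  obtain ⟨τ, hτ⟩ : ∃ τ : ℝ, τ = ((4 * n ^ 2).divisors.card : ℝ) := ⟨_, rfl⟩
  have hτ0 : 0 ≤ τ := by rw [hτ]; exact Nat.cast_nonneg _
  rw [← hτ] at hT hP
  obtain ⟨T, hTdef⟩ : ∃ T, T = ∑ A ∈ Finset.Ioc 0 n, ((halfRoots n A).card : ℝ) := ⟨_, rfl⟩
  obtain ⟨P, hPdef⟩ : ∃ P, P = ∑ A ∈ Finset.Ioc m n, ((halfRoots n A).card : ℝ) := ⟨_, rfl⟩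
  rw [← hTdef] at hT ⊢
  rw [← hPdef] at hP ⊢
  have hmain := abs_two_mul_sub_le hs0 hs1 hnR hm1 hm2 (rootSum_nonneg n n) (hc n le_rfl)
    (hc m hmn) hT hP
  have hF : rootSum n n ≤ 2 * T := by
    rw [hTdef, Finset.mul_sum]
    refine Finset.sum_le_sum fun A _ => ?_
    exact_mod_cast primRootCount_le_two_mul_card_halfRoots n A
  have hlow := le_mul_rootSum hn
  obtain ⟨K, hK⟩ : ∃ K : ℝ, K = smoothCount n * maxDivisors n := ⟨_, rfl⟩
  have hK0 : 0 ≤ K := by rw [hK]; positivity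
  have hlow' : (n : ℝ) ≤ 64 * K * (2 * T) := by
    refine hlow.trans ?_
    rw [mul_assoc 64, ← hK]
    exact mul_le_mul_of_nonneg_left hF (by positivity)
  have hTpos : 0 < 2 * T := by
    by_contra! h
    have := mul_nonpos_of_nonneg_of_nonpos (by positivity : 0 ≤ 64 * K) h
    linarith
  have hsq : (n : ℝ) = √n * √n := (Real.mul_self_sqrt (by linarith)).symm
  have hsq0 : 0 < √(n : ℝ) := Real.sqrt_pos.mpr (by linarith)
  have hE0 : 0 ≤ rootErr n * √n := (abs_nonneg _).trans (hc n le_rfl)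
  rw [Real.rpow_one, ← Real.sqrt_eq_rpow, ← hK, Real.norm_eq_abs, ← hτ]
  have hTinv : 1 / (2 * T) ≤ 64 * K / n := by
    rw [div_le_div_iff₀ hTpos (by linarith)]
    linarith
  calc |P / T - s| = |2 * P - s * (2 * T)| / (2 * T) := by
        rw [← abs_of_pos hTpos, ← abs_div, abs_of_pos hTpos]
        congr 1
        have : T ≠ 0 := by linarith
        field_simp
    _ ≤ (3 * (2 * τ) + 3 * (rootErr n * √n) + 2 * T / n) / (2 * T) := by
        gcongr
    _ = (6 * τ + 3 * (rootErr n * √n)) * (1 / (2 * T)) + 1 / n := by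
        have : T ≠ 0 := by linarith
        field_simp
        ring
    _ ≤ (6 * τ + 3 * (rootErr n * √n)) * (64 * K / n) + 1 / n := by
        have : (0 : ℝ) ≤ 6 * τ + 3 * (rootErr n * √n) := by positivity
        gcongr
    _ = _ := by
        have h1 : rootErr n * √n / n = rootErr n / √n := by
          rw [div_eq_div_iff (by linarith) hsq0.ne', mul_assoc, ← hsq]
        rw [show (6 * τ + 3 * (rootErr n * √n)) * (64 * K / n) + 1 / n =
          384 * τ * K / n + 192 * K * (rootErr n * √n / n) + 1 / n by ring, h1]
        ring

lemma gcd_four_eq_one_iff (a b c d : ℤ) :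
    Int.gcd (Int.gcd (Int.gcd a b : ℤ) c : ℤ) d = 1 ↔
      ∀ p : ℕ, p.Prime → ¬ ((p : ℤ) ∣ a ∧ (p : ℤ) ∣ b ∧ (p : ℤ) ∣ c ∧ (p : ℤ) ∣ d) := by
  rw [Nat.eq_one_iff_not_exists_prime_dvd]
  refine forall_congr' fun p => imp_congr_right fun _ => not_congr ?_
  rw [← Int.natCast_dvd_natCast, Int.dvd_coe_gcd_iff, Int.dvd_coe_gcd_iff, Int.dvd_coe_gcd_iff,
    and_assoc, and_assoc]

lemma S₄_mulVec (q : Fin 4 → ℤ) :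
    S₄ *ᵥ q = ![q 0, q 1, q 2, 2 * (q 0 + q 1 + q 2) - q 3] := by
  ext i
  fin_cases i <;> simp [S₄, mulVec, dotProduct, Fin.sum_univ_four]
  ring

lemma P₂₃_mulVec (q : Fin 4 → ℤ) : P₂₃ *ᵥ q = ![q 0, q 2, q 1, q 3] := by
  ext i
  fin_cases i <;> simp [P₂₃, mulVec, dotProduct, Fin.sum_univ_four]

lemma P₂₄_mulVec (q : Fin 4 → ℤ) : P₂₄ *ᵥ q = ![q 0, q 3, q 2, q 1] := by
  ext i
  fin_cases i <;> simp [P₂₄, mulVec, dotProduct, Fin.sum_univ_four]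

lemma S₄_mul_self : S₄ * S₄ = 1 := by decide

lemma P₂₃_mul_self : P₂₃ * P₂₃ = 1 := by decide

lemma P₂₄_mul_self : P₂₄ * P₂₄ = 1 := by decide

lemma S₄_mem_Ap₁ : S₄ ∈ Ap₁ := Submonoid.subset_closure (by simp)

lemma P₂₃_mem_Ap₁ : P₂₃ ∈ Ap₁ := Submonoid.subset_closure (by simp)

lemma P₂₄_mem_Ap₁ : P₂₄ ∈ Ap₁ := Submonoid.subset_closure (by simp)

/-- A property preserved by the generators is preserved by `Ap₁`. -/
lemma Ap₁_induction {p : (Fin 4 → ℤ) → Prop} (hS : ∀ q, p q → p (S₄ *ᵥ q))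
    (h₂₃ : ∀ q, p q → p (P₂₃ *ᵥ q)) (h₂₄ : ∀ q, p q → p (P₂₄ *ᵥ q))
    {M : Matrix (Fin 4) (Fin 4) ℤ} (hM : M ∈ Ap₁) : ∀ q, p q → p (M *ᵥ q) := by
  induction hM using Submonoid.closure_induction with
  | mem M hM =>
    rcases hM with rfl | rfl | rfl
    · exact h₂₃
    · exact h₂₄
    · exact hS
  | one => simp
  | mul M N _ _ hM hN =>
    intro q hq
    rw [← mulVec_mulVec]
    exact hM _ (hN _ hq)

lemma exists_mul_eq_one_of_mem_Ap₁ {M : Matrix (Fin 4) (Fin 4) ℤ} (hM : M ∈ Ap₁) :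
    ∃ N ∈ Ap₁, N * M = 1 := by
  induction hM using Submonoid.closure_induction with
  | mem M hM =>
    refine ⟨M, Submonoid.subset_closure hM, ?_⟩
    rcases hM with rfl | rfl | rfl
    · exact P₂₃_mul_self
    · exact P₂₄_mul_self
    · exact S₄_mul_self
  | one => exact ⟨1, one_mem _, one_mul _⟩
  | mul M N _ _ hM hN =>
    obtain ⟨M', hM', h1⟩ := hM
    obtain ⟨N', hN', h2⟩ := hN
    refine ⟨N' * M', mul_mem hN' hM', ?_⟩
    rw [mul_assoc, ← mul_assoc M', h1, one_mul, h2]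

/-- The `Ap₁`-orbit relation. -/
def Ap₁Rel (q q' : Fin 4 → ℤ) : Prop := ∃ M ∈ Ap₁, q' = M *ᵥ q

namespace Ap₁Rel

lemma refl (q : Fin 4 → ℤ) : Ap₁Rel q q := ⟨1, one_mem _, (one_mulVec q).symm⟩

lemma symm {q q' : Fin 4 → ℤ} (h : Ap₁Rel q q') : Ap₁Rel q' q := by
  obtain ⟨M, hM, rfl⟩ := h
  obtain ⟨N, hN, hNM⟩ := exists_mul_eq_one_of_mem_Ap₁ hM
  exact ⟨N, hN, by rw [mulVec_mulVec, hNM, one_mulVec]⟩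

lemma trans {q q' q'' : Fin 4 → ℤ} (h : Ap₁Rel q q') (h' : Ap₁Rel q' q'') : Ap₁Rel q q'' := by
  obtain ⟨M, hM, rfl⟩ := h
  obtain ⟨N, hN, rfl⟩ := h'
  exact ⟨N * M, mul_mem hN hM, mulVec_mulVec _ _ _⟩

lemma setOf_eq {q q' : Fin 4 → ℤ} (h : Ap₁Rel q q') :
    {x | ∃ M ∈ Ap₁, x = M *ᵥ q} = {x | ∃ M ∈ Ap₁, x = M *ᵥ q'} :=
  Set.ext fun _ => ⟨fun hx => h.symm.trans hx, fun hx => h.trans hx⟩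

end Ap₁Rel

/-- In a Descartes quadruple, if two of the sums `n + x` are nonnegative then so is the third. -/
lemma descartes_add_nonneg {n a b c : ℤ}
    (h : (n + a + b + c) ^ 2 = 2 * (n ^ 2 + a ^ 2 + b ^ 2 + c ^ 2))
    (ha : 0 ≤ n + a) (hb : 0 ≤ n + b) : 0 ≤ n + c := by
  by_contra! hc
  nlinarith [mul_nonneg ha (neg_nonneg.mpr hc.le), mul_nonneg hb (neg_nonneg.mpr hc.le),
    sq_nonneg (a - b), sq_nonneg n, mul_pos_of_neg_of_neg hc hc]

lemma mulVec_mem_DSet {n : ℤ} {M : Matrix (Fin 4) (Fin 4) ℤ} (hM : M ∈ Ap₁) :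
    ∀ q, q ∈ DSet n → M *ᵥ q ∈ DSet n := by
  simp only [DSet, gcd_four_eq_one_iff, Set.mem_ofPred_eq]
  refine Ap₁_induction ?_ ?_ ?_ hM
  · rintro q ⟨h0, hg, hd, ha, hb⟩
    simp only [S₄_mulVec, cons_val]
    refine ⟨h0, fun p hp h => hg p hp ⟨h.1, h.2.1, h.2.2.1, ?_⟩, by linarith, ha, hb⟩
    have h1 : (p : ℤ) ∣ 2 * (q 0 + q 1 + q 2) := ((h.1.add h.2.1).add h.2.2.1).mul_left 2
    exact (dvd_sub_right h1).mp h.2.2.2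
  · rintro q ⟨h0, hg, hd, ha, hb⟩
    simp only [P₂₃_mulVec, cons_val]
    exact ⟨h0, fun p hp h => hg p hp ⟨h.1, h.2.2.1, h.2.1, h.2.2.2⟩, by linarith, hb, ha⟩
  · rintro q ⟨h0, hg, hd, ha, hb⟩
    simp only [P₂₄_mulVec, cons_val]
    exact ⟨h0, fun p hp h => hg p hp ⟨h.1, h.2.2.2, h.2.2.1, h.2.1⟩, by linarith,
      descartes_add_nonneg hd ha hb, hb⟩

/-- The Descartes quadruple attached to the form `A x² + 2 H x y + B y²`, where
`A B = H² + n²`. -/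
def rootQuad (n A H : ℤ) : Fin 4 → ℤ :=
  ![n, A - n, (H ^ 2 + n ^ 2) / A - n, A + (H ^ 2 + n ^ 2) / A - 2 * H - n]

lemma rootQuad_eq {n A B H : ℤ} (hA : A ≠ 0) (h : A * B = H ^ 2 + n ^ 2) :
    rootQuad n A H = ![n, A - n, B - n, A + B - 2 * H - n] := by
  rw [rootQuad, ← h, Int.mul_ediv_cancel_left _ hA]

/-- Every quadruple in `DSet n` comes from a positive definite form. -/
lemma exists_eq_rootQuad {n : ℤ} (hn : 0 < n) {q : Fin 4 → ℤ} (hq : q ∈ DSet n) :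
    ∃ H : ℤ, 0 < n + q 1 ∧ (n + q 1) ∣ H ^ 2 + n ^ 2 ∧ q = rootQuad n (n + q 1) H := by
  obtain ⟨h0, -, hd, ha, hb⟩ := hq
  rw [h0] at hd ha hb
  have hpar : Even (n + q 1 + q 2 - q 3) := by
    have h1 : Even ((n + q 1 + q 2 + q 3) ^ 2) := ⟨_, hd.trans (two_mul _)⟩
    have h2 : Even (n + q 1 + q 2 + q 3) := (Int.even_pow' two_ne_zero).mp h1
    have : n + q 1 + q 2 - q 3 = (n + q 1 + q 2 + q 3) - (q 3 + q 3) := by ring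
    rw [this]
    exact h2.sub ⟨_, rfl⟩
  obtain ⟨H, hH⟩ := hpar
  have hAB : (n + q 1) * (n + q 2) = H ^ 2 + n ^ 2 := by
    have h3 : q 3 = n + q 1 + q 2 - 2 * H := by linarith
    rw [h3] at hd
    linarith
  have hpos : 0 < n + q 1 := by
    refine lt_of_le_of_ne ha fun h => ?_
    rw [← h] at hAB
    nlinarith [sq_nonneg H]
  refine ⟨H, hpos, ⟨_, hAB.symm⟩, ?_⟩
  rw [rootQuad_eq hpos.ne' hAB]
  ext i
  fin_cases i <;> simp [h0]
  linarith

lemma rootQuad_mem_DSet_iff {n A H : ℕ} (hA : 0 < A) (hdvd : A ∣ H ^ 2 + n ^ 2) :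
    rootQuad n A H ∈ DSet n ↔ IsPrimRoot n A H := by
  obtain ⟨B, hB⟩ := hdvd
  have hBZ : (A : ℤ) * B = (H : ℤ) ^ 2 + (n : ℤ) ^ 2 := by exact_mod_cast hB.symm
  rw [rootQuad_eq (by exact_mod_cast hA.ne') hBZ, DSet, Set.mem_ofPred_eq, gcd_four_eq_one_iff,
    IsPrimRoot]
  simp only [cons_val]
  have hgcd : ∀ p : ℕ, p.Prime → (((p : ℤ) ∣ n ∧ (p : ℤ) ∣ (A : ℤ) - n ∧ (p : ℤ) ∣ (B : ℤ) - n ∧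
      (p : ℤ) ∣ (A : ℤ) + B - 2 * H - n) ↔ p ∣ A ∧ p ∣ 2 * H ∧ p * A ∣ H ^ 2 + n ^ 2) := by
    intro p hp
    rw [hB, mul_comm p A, Nat.mul_dvd_mul_iff_left hA]
    constructor
    · rintro ⟨h1, h2, h3, h4⟩
      have hA' : (p : ℤ) ∣ A := (dvd_sub_left h1).mp h2
      have hB' : (p : ℤ) ∣ B := (dvd_sub_left h1).mp h3
      have hH' : (p : ℤ) ∣ 2 * H := (dvd_sub_right (hA'.add hB')).mp ((dvd_sub_left h1).mp h4)
      exact ⟨by exact_mod_cast hA', by exact_mod_cast hH', by exact_mod_cast hB'⟩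
    · rintro ⟨h1, h2, h3⟩
      have hn : p ∣ n := by
        rcases (Nat.Prime.dvd_mul hp).mp h2 with h | h
        · obtain rfl := (Nat.prime_dvd_prime_iff_eq hp Nat.prime_two).mp h
          have h4 : 4 ∣ H ^ 2 + n ^ 2 := by
            rw [hB]; exact mul_dvd_mul h1 h3
          rcases Nat.even_or_odd n with hn | ⟨k, hk⟩
          · exact hn.two_dvd
          · exfalso
            have h5 : n ^ 2 % 4 = 1 := by
              rw [hk]
              have : (2 * k + 1) ^ 2 = 4 * (k ^ 2 + k) + 1 := by ring
              omega
            rcases Nat.even_or_odd' H with ⟨k, rfl | rfl⟩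
            · have : (2 * k) ^ 2 = 4 * k ^ 2 := by ring
              omega
            · have : (2 * k + 1) ^ 2 = 4 * (k ^ 2 + k) + 1 := by ring
              omega
        · refine hp.dvd_of_dvd_pow (n := 2) ((Nat.dvd_add_right (h.mul_right H)).mp ?_)
          rw [← pow_two, hB]
          exact h1.mul_right B
      have h1' : (p : ℤ) ∣ A := by exact_mod_cast h1
      have h2' : (p : ℤ) ∣ 2 * H := by exact_mod_cast h2
      have h3' : (p : ℤ) ∣ B := by exact_mod_cast h3
      have hn' : (p : ℤ) ∣ n := by exact_mod_cast hn
      exact ⟨hn', h1'.sub hn', h3'.sub hn', ((h1'.add h3').sub h2').sub hn'⟩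
  have hprim : (∀ p : ℕ, p.Prime → ¬ ((p : ℤ) ∣ n ∧ (p : ℤ) ∣ (A : ℤ) - n ∧ (p : ℤ) ∣ (B : ℤ) - n ∧
      (p : ℤ) ∣ (A : ℤ) + B - 2 * H - n)) ↔
      ∀ p : ℕ, p.Prime → p ∣ A → p ∣ 2 * H → ¬ p * A ∣ H ^ 2 + n ^ 2 := by
    refine forall_congr' fun p => imp_congr_right fun hp => ?_
    rw [hgcd p hp, not_and, imp_congr_right fun _ => not_and]
  rw [hprim]
  constructor
  · exact fun h => ⟨⟨B, hB⟩, h.2.1⟩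
  · exact fun h => ⟨trivial, h.2, by linarith, by omega, by omega⟩

lemma ap₁Rel_rootQuad_neg {n A H : ℤ} (hA : A ≠ 0) (h : A ∣ H ^ 2 + n ^ 2) :
    Ap₁Rel (rootQuad n A H) (rootQuad n A (-H)) := by
  obtain ⟨B, hB⟩ := h
  refine ⟨S₄, S₄_mem_Ap₁, ?_⟩
  rw [rootQuad_eq hA hB.symm, rootQuad_eq (B := B) hA (by rw [← hB]; ring), S₄_mulVec]
  ext i
  fin_cases i <;> simp
  ring

lemma ap₁Rel_rootQuad_sub {n A H : ℤ} (hA : A ≠ 0) (h : A ∣ H ^ 2 + n ^ 2) :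
    Ap₁Rel (rootQuad n A H) (rootQuad n A (A - H)) := by
  obtain ⟨B, hB⟩ := h
  refine ⟨P₂₃ * P₂₄ * P₂₃, mul_mem (mul_mem P₂₃_mem_Ap₁ P₂₄_mem_Ap₁) P₂₃_mem_Ap₁, ?_⟩
  rw [rootQuad_eq hA hB.symm, rootQuad_eq (B := A + B - 2 * H) hA (by linear_combination -hB),
    ← mulVec_mulVec, ← mulVec_mulVec, P₂₃_mulVec, P₂₄_mulVec, P₂₃_mulVec]
  ext i
  fin_cases i <;> simp
  ring

lemma ap₁Rel_rootQuad_add_mul {n A H : ℤ} (hA : A ≠ 0) (h : A ∣ H ^ 2 + n ^ 2) (k : ℤ) :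
    Ap₁Rel (rootQuad n A H) (rootQuad n A (H + A * k)) := by
  have hdvd : ∀ k : ℤ, A ∣ (H + A * k) ^ 2 + n ^ 2 := by
    intro k
    have : (H + A * k) ^ 2 + n ^ 2 = H ^ 2 + n ^ 2 + A * (2 * H * k + A * k ^ 2) := by ring
    rw [this]
    exact h.add (Dvd.intro _ rfl)
  have hstep : ∀ k : ℤ,
      Ap₁Rel (rootQuad n A (H + A * k)) (rootQuad n A (H + A * (k + 1))) := by
    intro k
    have h1 := ap₁Rel_rootQuad_neg hA (hdvd k)
    have h2 := ap₁Rel_rootQuad_sub (n := n) hA (H := -(H + A * k)) (by rw [neg_sq]; exact hdvd k)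
    rw [show A - -(H + A * k) = H + A * (k + 1) by ring] at h2
    exact h1.trans h2
  induction k using Int.induction_on with
  | zero => rw [mul_zero, add_zero]; exact .refl _
  | succ k ih => exact ih.trans (hstep k)
  | pred k ih =>
    have := hstep (-k - 1)
    rw [sub_add_cancel] at this
    exact ih.trans this.symm

/-- A class with a nonpositive entry contains a reduced `rootQuad`. -/
lemma exists_ap₁Rel_rootQuad {n : ℤ} (hn : 0 < n) {q : Fin 4 → ℤ} (hq : q ∈ DSet n) {i : Fin 4}
    (hi : q i ≤ 0) :
    ∃ A H : ℕ, 0 < A ∧ (A : ℤ) ≤ n ∧ 2 * H ≤ A ∧ (A : ℤ) ∣ (H : ℤ) ^ 2 + n ^ 2 ∧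
      Ap₁Rel q (rootQuad n A H) := by
  have hfirst : ∃ q', Ap₁Rel q q' ∧ q' 1 ≤ 0 := by
    have h0 : q 0 = n := hq.1
    fin_cases i
    · simp only [Fin.zero_eta] at hi
      omega
    · exact ⟨q, .refl q, hi⟩
    · exact ⟨_, ⟨P₂₃, P₂₃_mem_Ap₁, rfl⟩, by rw [P₂₃_mulVec]; exact hi⟩
    · exact ⟨_, ⟨P₂₄, P₂₄_mem_Ap₁, rfl⟩, by rw [P₂₄_mulVec]; exact hi⟩
  obtain ⟨q', hrel, hq'1⟩ := hfirst
  have hq' : q' ∈ DSet n := by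
    obtain ⟨M, hM, rfl⟩ := hrel
    exact mulVec_mem_DSet hM q hq
  obtain ⟨H, hpos, hdvd, hH⟩ := exists_eq_rootQuad hn hq'
  obtain ⟨A, hA⟩ := Int.eq_ofNat_of_zero_le hpos.le
  rw [hA] at hpos hdvd hH
  rw [hH] at hrel
  have hrel' := hrel.trans (ap₁Rel_rootQuad_add_mul hpos.ne' hdvd (-(H / A)))
  have hmod : H + A * -(H / A) = H % A := by
    rw [Int.emod_def]; ring
  rw [hmod] at hrel'
  have hdvd' : (A : ℤ) ∣ (H % A) ^ 2 + n ^ 2 := by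
    rw [Int.dvd_iff_emod_eq_zero] at hdvd ⊢
    rw [← hdvd]
    exact ((Int.mod_modEq H A).pow 2).add_right _
  have h0 := Int.emod_nonneg H hpos.ne'
  have h1 := Int.emod_lt_of_pos H hpos
  obtain ⟨r, hr⟩ := Int.eq_ofNat_of_zero_le h0
  rw [hr] at hrel' hdvd' h1
  rcases Nat.lt_or_ge A (2 * r) with h | h
  · have hsub : ((A - r : ℕ) : ℤ) = A - r := by omega
    refine ⟨A, A - r, by omega, by omega, by omega, ?_, ?_⟩
    · have : ((A - r : ℕ) : ℤ) ^ 2 + n ^ 2 = (r : ℤ) ^ 2 + n ^ 2 + A * (A - 2 * r) := by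
        rw [hsub]; ring
      rw [this]
      exact hdvd'.add (Dvd.intro _ rfl)
    · rw [hsub]
      exact hrel'.trans (ap₁Rel_rootQuad_sub hpos.ne' hdvd')
  · exact ⟨A, r, by omega, by omega, h, hdvd', hrel'⟩

/-- The members of the class of `rootQuad n A H` are given by the values of the form
`A x² + 2 H x y + B y²` at a basis of `ℤ²` and at its difference. -/
lemma exists_basis_of_ap₁Rel {n A B H : ℤ} (hA : A ≠ 0) (h : A * B = H ^ 2 + n ^ 2)
    {q : Fin 4 → ℤ} (hq : Ap₁Rel (rootQuad n A H) q) :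
    ∃ x y z t : ℤ, (x * t - y * z = 1 ∨ x * t - y * z = -1) ∧
      q = ![n, A * x ^ 2 + 2 * H * x * y + B * y ^ 2 - n,
        A * z ^ 2 + 2 * H * z * t + B * t ^ 2 - n,
        A * (x - z) ^ 2 + 2 * H * (x - z) * (y - t) + B * (y - t) ^ 2 - n] := by
  obtain ⟨M, hM, rfl⟩ := hq
  refine Ap₁_induction (p := fun q => ∃ x y z t : ℤ,
      (x * t - y * z = 1 ∨ x * t - y * z = -1) ∧
      q = ![n, A * x ^ 2 + 2 * H * x * y + B * y ^ 2 - n,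
        A * z ^ 2 + 2 * H * z * t + B * t ^ 2 - n,
        A * (x - z) ^ 2 + 2 * H * (x - z) * (y - t) + B * (y - t) ^ 2 - n]) ?_ ?_ ?_ hM _
      ⟨1, 0, 0, 1, by norm_num, ?_⟩
  · rintro q ⟨x, y, z, t, hdet, rfl⟩
    refine ⟨x, y, -z, -t, ?_, ?_⟩
    · rw [show x * -t - y * -z = -(x * t - y * z) by ring, neg_inj, neg_eq_iff_eq_neg]
      exact hdet.symm
    · rw [S₄_mulVec]
      ext i
      fin_cases i <;> simp
      ring
  · rintro q ⟨x, y, z, t, hdet, rfl⟩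
    refine ⟨z, t, x, y, ?_, ?_⟩
    · rw [show z * y - t * x = -(x * t - y * z) by ring, neg_inj, neg_eq_iff_eq_neg]
      exact hdet.symm
    · rw [P₂₃_mulVec]
      ext i
      fin_cases i <;> simp
      ring
  · rintro q ⟨x, y, z, t, hdet, rfl⟩
    refine ⟨x - z, y - t, -z, -t, ?_, ?_⟩
    · rw [show (x - z) * -t - (y - t) * -z = -(x * t - y * z) by ring, neg_inj,
        neg_eq_iff_eq_neg]
      exact hdet.symm
    · rw [P₂₄_mulVec]
      ext i
      fin_cases i <;> simp
  · rw [rootQuad_eq hA h]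
    ext i
    fin_cases i <;> simp
    ring

/-- Reduced quadruples in the same class are equal. -/
lemma eq_of_ap₁Rel_rootQuad {n A H A' H' : ℕ} (hn : 2 ≤ n) (hA : 0 < A) (hAn : A ≤ n)
    (hH : 2 * H ≤ A) (hroot : IsPrimRoot n A H) (hA' : 0 < A') (hAn' : A' ≤ n)
    (hH' : 2 * H' ≤ A') (hroot' : IsPrimRoot n A' H')
    (hrel : Ap₁Rel (rootQuad n A H) (rootQuad n A' H')) : A = A' ∧ H = H' := by
  obtain ⟨B, hB⟩ := hroot.1
  obtain ⟨B', hB'⟩ := hroot'.1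
  have hBZ : (A : ℤ) * B = (H : ℤ) ^ 2 + (n : ℤ) ^ 2 := by exact_mod_cast hB.symm
  have hBZ' : (A' : ℤ) * B' = (H' : ℤ) ^ 2 + (n : ℤ) ^ 2 := by exact_mod_cast hB'.symm
  have hA0 : (0 : ℤ) < A := by exact_mod_cast hA
  have hA0' : (0 : ℤ) < A' := by exact_mod_cast hA'
  obtain ⟨x, y, z, t, hdet, hq⟩ := exists_basis_of_ap₁Rel hA0.ne' hBZ hrel
  rw [rootQuad_eq hA0'.ne' hBZ'] at hq
  have e1 := congrFun hq 1
  have e2 := congrFun hq 2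
  have e3 := congrFun hq 3
  simp only [cons_val] at e1 e2 e3
  have hnZ : (2 : ℤ) ≤ n := by exact_mod_cast hn
  have hAnZ : (A : ℤ) ≤ n := by exact_mod_cast hAn
  have hAnZ' : (A' : ℤ) ≤ n := by exact_mod_cast hAn'
  have hy : y = 0 := by
    by_contra hy
    have hprod : (A : ℤ) * A' = (A * x + H * y) ^ 2 + n ^ 2 * y ^ 2 := by
      linear_combination (A : ℤ) * e1 + y ^ 2 * hBZ
    have hy1 : 1 ≤ y ^ 2 := by
      have := sq_pos_of_ne_zero hy
      omega
    have hsq0 := sq_nonneg ((A : ℤ) * x + H * y)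
    have hle : (A : ℤ) * A' ≤ n ^ 2 := by
      rw [pow_two]
      exact mul_le_mul hAnZ hAnZ' hA0'.le (by linarith)
    have hge : (n : ℤ) ^ 2 ≤ n ^ 2 * y ^ 2 := le_mul_of_one_le_right (sq_nonneg _) hy1
    have hsq : ((A : ℤ) * x + H * y) ^ 2 = 0 := by linarith
    have hlin : (A : ℤ) * x + H * y = 0 := (pow_eq_zero_iff two_ne_zero).mp hsq
    have hAA : (A : ℤ) = n := by
      refine le_antisymm hAnZ (le_of_mul_le_mul_right ?_ (by linarith : (0 : ℤ) < n))
      have := mul_le_mul_of_nonneg_left hAnZ' hA0.le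
      linarith
    have hy2 : y ^ 2 = 1 := by
      refine le_antisymm (le_of_mul_le_mul_left ?_ (by positivity : (0 : ℤ) < n ^ 2)) hy1
      linarith
    have hdvdH : (n : ℤ) ∣ H := by
      refine ⟨-x * y, ?_⟩
      linear_combination (-(H : ℤ)) * hy2 + y * hlin - x * y * hAA
    have hH0 : H = 0 := by
      refine Nat.eq_zero_of_dvd_of_lt (Int.natCast_dvd_natCast.mp hdvdH) (by omega)
    have hAn2 : A = n := by exact_mod_cast hAA
    subst hH0 hAn2
    refine hroot.2 A.minFac (Nat.minFac_prime (by omega)) A.minFac_dvd (by simp) ?_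
    rw [zero_pow two_ne_zero, zero_add, pow_two]
    exact Nat.mul_dvd_mul_right A.minFac_dvd A
  subst hy
  have hxt : x * t = 1 ∨ x * t = -1 := by simpa using hdet
  have hx2 : x ^ 2 = 1 := by
    rw [sq_eq_one_iff]
    rcases hxt with h | h
    · exact Int.eq_one_or_neg_one_of_mul_eq_one h
    · exact Int.eq_one_or_neg_one_of_mul_eq_neg_one h
  have hAA : (A' : ℤ) = A := by
    linear_combination e1 + A * hx2
  have hHH : (H' : ℤ) = A * (x * z) + H * (x * t) := by
    have : 2 * (H' : ℤ) = 2 * (A * (x * z) + H * (x * t)) := by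
      linear_combination e1 + e2 - e3
    linarith
  have hAA2 : A' = A := by exact_mod_cast hAA
  refine ⟨hAA2.symm, ?_⟩
  subst hAA2
  have hHZ : 2 * (H : ℤ) ≤ A' := by exact_mod_cast hH
  have hHZ' : 2 * (H' : ℤ) ≤ A' := by exact_mod_cast hH'
  generalize x * z = k at hHH
  rcases hxt with h | h
  · rw [h] at hHH
    have h1 : -1 < k := by nlinarith
    have h2 : k < 1 := by nlinarith
    have : k = 0 := by omega
    subst this
    omega
  · rw [h] at hHH
    have h1 : -1 < k := by nlinarith
    have h2 : k < 2 := by nlinarith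
    obtain rfl | rfl : k = 0 ∨ k = 1 := by omega
    · omega
    · omega

/-- Descartes quadruples all of whose pair sums are nonnegative. -/
def IsPacked (q : Fin 4 → ℤ) : Prop :=
  (∑ i, q i) ^ 2 = 2 * ∑ i, q i ^ 2 ∧ ∀ i j, i ≠ j → 0 ≤ q i + q j

/-- Replace the entry `q i` by the other solution of the Descartes equation. -/
def reflectAt (i : Fin 4) (q : Fin 4 → ℤ) : Fin 4 → ℤ :=
  Function.update q i (2 * ∑ j, q j - 3 * q i)

lemma reflectAt_self (i : Fin 4) (q : Fin 4 → ℤ) : reflectAt i q i = 2 * ∑ j, q j - 3 * q i :=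
  Function.update_self _ _ _

lemma reflectAt_of_ne {i j : Fin 4} (h : j ≠ i) (q : Fin 4 → ℤ) : reflectAt i q j = q j :=
  Function.update_of_ne h _ _

lemma sum_reflectAt (i : Fin 4) (q : Fin 4 → ℤ) :
    ∑ j, reflectAt i q j = 3 * ∑ j, q j - 4 * q i := by
  have h := Finset.sum_sdiff (f := q) (Finset.subset_univ {i})
  rw [Finset.sum_singleton] at h
  rw [reflectAt, Finset.sum_update_of_mem (Finset.mem_univ i)]
  linarith

lemma reflectAt_reflectAt (i : Fin 4) (q : Fin 4 → ℤ) : reflectAt i (reflectAt i q) = q := by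
  ext j
  by_cases h : j = i
  · subst h
    rw [reflectAt_self, sum_reflectAt, reflectAt_self]; ring
  · rw [reflectAt_of_ne h, reflectAt_of_ne h]

lemma reflectAt_comp (σ : Equiv.Perm (Fin 4)) (i : Fin 4) (q : Fin 4 → ℤ) :
    reflectAt i (q ∘ σ) = reflectAt (σ i) q ∘ σ := by
  have hs : ∑ j, (q ∘ σ) j = ∑ j, q j := Equiv.sum_comp σ q
  ext j
  by_cases h : j = i
  · subst h
    rw [reflectAt_self, Function.comp_apply, Function.comp_apply, reflectAt_self, hs]
  · rw [reflectAt_of_ne h, Function.comp_apply, Function.comp_apply,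
      reflectAt_of_ne (σ.injective.ne h)]

namespace IsPacked

lemma pairs {q : Fin 4 → ℤ} (hq : IsPacked q) : 0 ≤ q 0 + q 1 ∧ 0 ≤ q 0 + q 2 ∧
    0 ≤ q 0 + q 3 ∧ 0 ≤ q 1 + q 2 ∧ 0 ≤ q 1 + q 3 ∧ 0 ≤ q 2 + q 3 :=
  ⟨hq.2 0 1 (by decide), hq.2 0 2 (by decide), hq.2 0 3 (by decide), hq.2 1 2 (by decide),
    hq.2 1 3 (by decide), hq.2 2 3 (by decide)⟩

/-- Reflecting a nonpositive entry does not decrease it. -/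
lemma le_reflectAt_of_nonpos {q : Fin 4 → ℤ} (hq : IsPacked q) {i : Fin 4} (hi : q i ≤ 0) :
    q i ≤ reflectAt i q i := by
  rw [reflectAt_self, Fin.sum_univ_four]
  obtain ⟨h01, h02, h03, h12, h13, h23⟩ := hq.pairs
  fin_cases i <;> simp only [Fin.zero_eta, Fin.mk_one, Fin.reduceFinMk] at * <;> linarith

/-- Two distinct entries cannot both be decreased by a reflection. -/
lemma le_reflectAt {q : Fin 4 → ℤ} (hq : IsPacked q) {i j : Fin 4} (hij : i ≠ j)
    (hi : reflectAt i q i ≤ q i) : q j ≤ reflectAt j q j := by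
  rw [reflectAt_self] at *
  obtain ⟨h01, h02, h03, h12, h13, h23⟩ := hq.pairs
  rw [Fin.sum_univ_four] at *
  fin_cases i <;> fin_cases j <;> simp only [Fin.zero_eta, Fin.mk_one, Fin.reduceFinMk] at *
  all_goals first | exact absurd rfl hij | linarith

lemma comp {q : Fin 4 → ℤ} (hq : IsPacked q) (σ : Equiv.Perm (Fin 4)) : IsPacked (q ∘ σ) := by
  refine ⟨?_, fun i j h => hq.2 _ _ (σ.injective.ne h)⟩
  simp only [Function.comp_apply]
  rw [Equiv.sum_comp σ q, Equiv.sum_comp σ fun i => q i ^ 2]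
  exact hq.1

lemma reflectAt_zero {q : Fin 4 → ℤ} (hq : IsPacked q) : IsPacked (reflectAt 0 q) := by
  obtain ⟨hd, hp⟩ := hq
  have h12 := hp 1 2 (by decide)
  have h13 := hp 1 3 (by decide)
  have h23 := hp 2 3 (by decide)
  have hd' : (∑ i, reflectAt 0 q i) ^ 2 = 2 * ∑ i, reflectAt 0 q i ^ 2 := by
    simp only [Fin.sum_univ_four, reflectAt, Function.update_self, ne_eq, Fin.reduceEq,
      not_false_eq_true, Function.update_of_ne] at hd ⊢
    linear_combination hd
  refine ⟨hd', ?_⟩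
  have e1 : reflectAt 0 q 1 = q 1 := rfl
  have e2 : reflectAt 0 q 2 = q 2 := rfl
  have e3 : reflectAt 0 q 3 = q 3 := rfl
  rw [Fin.sum_univ_four, Fin.sum_univ_four, e1, e2, e3] at hd'
  have h01 : 0 ≤ q 1 + reflectAt 0 q 0 :=
    descartes_add_nonneg (n := q 1) (a := q 2) (b := q 3) (by linarith) h12 h13
  have h02 : 0 ≤ q 2 + reflectAt 0 q 0 :=
    descartes_add_nonneg (n := q 2) (a := q 1) (b := q 3) (by linarith) (by linarith) h23
  have h03 : 0 ≤ q 3 + reflectAt 0 q 0 :=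
    descartes_add_nonneg (n := q 3) (a := q 1) (b := q 2) (by linarith) (by linarith)
      (by linarith)
  intro i j hij
  fin_cases i <;> fin_cases j <;> simp only [Fin.zero_eta, Fin.mk_one, Fin.reduceFinMk, e1, e2, e3]
  all_goals first | exact absurd rfl hij | linarith

lemma reflectAt {q : Fin 4 → ℤ} (hq : IsPacked q) (i : Fin 4) : IsPacked (reflectAt i q) := by
  have h := ((hq.comp (Equiv.swap 0 i)).reflectAt_zero).comp (Equiv.swap 0 i)
  rw [reflectAt_comp, Equiv.swap_apply_left, Function.comp_assoc] at h
  convert h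
  ext j
  simp

end IsPacked

/-- Quadruples obtained from a packed quadruple containing `a` by reflections that do not decrease the
flipped entry. -/
inductive Reach (a : ℤ) : (Fin 4 → ℤ) → Prop
  | base (q : Fin 4 → ℤ) (i : Fin 4) (hq : IsPacked q) (hi : q i = a) : Reach a q
  | step (q : Fin 4 → ℤ) (i : Fin 4) (hq : Reach a q) (hi : q i ≤ reflectAt i q i) :
    Reach a (reflectAt i q)

namespace Reach

variable {a : ℤ} {q : Fin 4 → ℤ}

lemma isPacked (h : Reach a q) : IsPacked q := by
  induction h with
  | base q i hq hi => exact hq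
  | step q i hq hi ih => exact ih.reflectAt i

lemma le (ha : a ≤ 0) (h : Reach a q) (j : Fin 4) : a ≤ q j := by
  induction h generalizing j with
  | base q i hq hi =>
    by_cases hj : i = j
    · exact hj ▸ hi.ge
    · have := hq.2 i j hj
      omega
  | step q i hq hi ih =>
    by_cases hj : j = i
    · subst hj
      exact (ih j).trans hi
    · rw [reflectAt_of_ne hj]
      exact ih j

lemma comp (h : Reach a q) (σ : Equiv.Perm (Fin 4)) : Reach a (q ∘ σ) := by
  induction h with
  | base q i hq hi => exact .base _ (σ.symm i) (hq.comp σ) (by simpa using hi)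
  | step q i hq hi ih =>
    obtain ⟨j, rfl⟩ := σ.surjective i
    rw [← reflectAt_comp]
    refine .step _ _ ih ?_
    rw [reflectAt_comp]
    exact hi

lemma reflectAt (ha : a ≤ 0) (h : Reach a q) (i : Fin 4) : Reach a (reflectAt i q) := by
  induction h with
  | base q j hq hj =>
    by_cases hij : j = i
    · refine .step _ _ (.base q j hq hj) ?_
      subst hij
      exact hq.le_reflectAt_of_nonpos (hj ▸ ha)
    · exact .base _ j (hq.reflectAt i) (by rw [reflectAt_of_ne hij, hj])
  | step q j hq hj ih =>
    by_cases hij : j = i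
    · rw [hij, reflectAt_reflectAt]; exact hq
    · refine .step _ _ (.step q j hq hj) (((Reach.step q j hq hj).isPacked).le_reflectAt hij ?_)
      rwa [reflectAt_reflectAt]

end Reach

lemma S₁_mulVec (q : Fin 4 → ℤ) : S₁ *ᵥ q = reflectAt 0 q := by
  ext i
  fin_cases i <;> simp [S₁, mulVec, dotProduct, Fin.sum_univ_four, reflectAt]
  ring

lemma S₂_mulVec (q : Fin 4 → ℤ) : S₂ *ᵥ q = reflectAt 1 q := by
  ext i
  fin_cases i <;> simp [S₂, mulVec, dotProduct, Fin.sum_univ_four, reflectAt]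
  ring

lemma S₃_mulVec (q : Fin 4 → ℤ) : S₃ *ᵥ q = reflectAt 2 q := by
  ext i
  fin_cases i <;> simp [S₃, mulVec, dotProduct, Fin.sum_univ_four, reflectAt]
  ring

lemma S₄_mulVec_eq_reflectAt (q : Fin 4 → ℤ) : S₄ *ᵥ q = reflectAt 3 q := by
  ext i
  fin_cases i <;> simp [S₄, mulVec, dotProduct, Fin.sum_univ_four, reflectAt]
  ring

lemma Reach.mulVec {a : ℤ} (ha : a ≤ 0) {M : Matrix (Fin 4) (Fin 4) ℤ} (hM : M ∈ Apfull) :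
    ∀ q, Reach a q → Reach a (M *ᵥ q) := by
  induction hM using Submonoid.closure_induction with
  | mem M hM =>
    intro q hq
    rcases hM with (rfl | rfl | rfl | rfl) | ⟨σ, rfl⟩
    · rw [S₁_mulVec]; exact hq.reflectAt ha 0
    · rw [S₂_mulVec]; exact hq.reflectAt ha 1
    · rw [S₃_mulVec]; exact hq.reflectAt ha 2
    · rw [S₄_mulVec_eq_reflectAt]; exact hq.reflectAt ha 3
    · rw [permMatrix_mulVec]; exact hq.comp σ
  | one => simp
  | mul M N _ _ hM hN =>
    intro q hq
    rw [← mulVec_mulVec]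
    exact hM _ (hN _ hq)

lemma permMatrix_mem_Apfull (σ : Equiv.Perm (Fin 4)) : σ.permMatrix ℤ ∈ Apfull :=
  Submonoid.subset_closure (.inr ⟨σ, rfl⟩)

lemma Ap₁_le_Apfull : Ap₁ ≤ Apfull := by
  refine Submonoid.closure_mono ?_
  rintro M (rfl | rfl | rfl)
  · exact .inr ⟨Equiv.swap 1 2, by decide⟩
  · exact .inr ⟨Equiv.swap 1 3, by decide⟩
  · simp

/-- A nonpositive curvature of a packing is its minimal curvature. -/
lemma MC_eq {q q' : Fin 4 → ℤ} (hq : IsPacked q) {i : Fin 4} (hi : q i ≤ 0)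
    (hrel : Ap₁Rel q q') : MC q' = -((q i : ℤ) : ℝ) := by
  refine IsGreatest.csSup_eq ⟨?_, ?_⟩
  · obtain ⟨N, hN, rfl⟩ := hrel.symm
    refine ⟨(Equiv.swap 0 i).permMatrix ℤ * N,
      mul_mem (permMatrix_mem_Apfull _) (Ap₁_le_Apfull hN), ?_⟩
    rw [← mulVec_mulVec, permMatrix_mulVec, Function.comp_apply, Equiv.swap_apply_left]
  · rintro _ ⟨M, hM, rfl⟩
    obtain ⟨N, hN, rfl⟩ := hrel
    have h1 : Reach (q i) q := .base q i hq rfl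
    have h2 := ((h1.mulVec hi (Ap₁_le_Apfull hN)).mulVec hi hM).le hi 0
    have h3 : ((q i : ℤ) : ℝ) ≤ (M *ᵥ N *ᵥ q) 0 := by exact_mod_cast h2
    linarith

lemma descartes_add_nonneg_of_nonneg {n a b c : ℤ}
    (h : (n + a + b + c) ^ 2 = 2 * (n ^ 2 + a ^ 2 + b ^ 2 + c ^ 2)) (hn : 0 ≤ n)
    (ha : 0 ≤ n + a) (hb : 0 ≤ n + b) : 0 ≤ a + b := by
  have h1 : n ^ 2 ≤ (n + a) * (n + b) := by
    nlinarith [sq_nonneg (n + a + b - c)]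
  by_contra! h2
  nlinarith [sq_nonneg (a - b)]

lemma isPacked_of_mem_DSet {n : ℤ} (hn : 0 ≤ n) {q : Fin 4 → ℤ} (hq : q ∈ DSet n) :
    IsPacked q := by
  obtain ⟨h0, -, hd, h01, h02⟩ := hq
  rw [← h0] at hn
  have h03 := descartes_add_nonneg hd h01 h02
  have h12 := descartes_add_nonneg_of_nonneg hd hn h01 h02
  have h13 := descartes_add_nonneg_of_nonneg (c := q 2) (by linarith) hn h01 h03
  have h23 := descartes_add_nonneg_of_nonneg (c := q 1) (by linarith) hn h02 h03
  refine ⟨by simpa only [Fin.sum_univ_four] using hd, fun i j hij => ?_⟩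
  fin_cases i <;> fin_cases j <;> simp only [Fin.zero_eta, Fin.mk_one, Fin.reduceFinMk]
  all_goals first | exact absurd rfl hij | linarith

/-- The pairs `(A, H)` parametrizing `ID₀ n`. -/
noncomputable def reducedRoots (n : ℕ) : Finset (Σ _ : ℕ, ℕ) :=
  (Finset.Ioc 0 n).sigma fun A => halfRoots n A

/-- The class attached to a pair `(A, H)`. -/
def rootClass (n : ℕ) (x : Σ _ : ℕ, ℕ) : Set (Fin 4 → ℤ) :=
  {q | Ap₁Rel (rootQuad n x.1 x.2) q}

lemma mem_reducedRoots {n : ℕ} {x : Σ _ : ℕ, ℕ} :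
    x ∈ reducedRoots n ↔ (0 < x.1 ∧ x.1 ≤ n) ∧ 2 * x.2 ≤ x.1 ∧ IsPrimRoot n x.1 x.2 := by
  rw [reducedRoots, Finset.mem_sigma, Finset.mem_Ioc, mem_halfRoots]

lemma rootQuad_mem_DSet {n : ℕ} {x : Σ _ : ℕ, ℕ} (hx : x ∈ reducedRoots n) :
    rootQuad n x.1 x.2 ∈ DSet n := by
  rw [mem_reducedRoots] at hx
  exact (rootQuad_mem_DSet_iff hx.1.1 hx.2.2.1).mpr hx.2.2

lemma rootClass_mem_ID₀ {n : ℕ} {x : Σ _ : ℕ, ℕ} (hx : x ∈ reducedRoots n) :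
    rootClass n x ∈ ID₀ n := by
  refine ⟨⟨_, rootQuad_mem_DSet hx, rfl⟩, _, .refl _, 1, ?_⟩
  have : (x.1 : ℤ) ≤ n := by exact_mod_cast (mem_reducedRoots.mp hx).1.2
  simpa [rootQuad] using this

lemma exists_rootClass_eq {n : ℕ} (hn : 0 < n) {O : Set (Fin 4 → ℤ)} (hO : O ∈ ID₀ n) :
    ∃ x ∈ reducedRoots n, rootClass n x = O := by
  obtain ⟨⟨q, hq, rfl⟩, q', ⟨M, hM, rfl⟩, i, hi⟩ := hO
  have hnZ : (0 : ℤ) < n := by exact_mod_cast hn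
  have hq' := mulVec_mem_DSet hM q hq
  obtain ⟨A, H, hA, hAn, hH, hdvd, hrel⟩ := exists_ap₁Rel_rootQuad hnZ hq' hi
  have hdvd' : A ∣ H ^ 2 + n ^ 2 := by exact_mod_cast hdvd
  have hrel' : Ap₁Rel q (rootQuad n A H) := Ap₁Rel.trans ⟨M, hM, rfl⟩ hrel
  have hmem : rootQuad n A H ∈ DSet n := by
    obtain ⟨N, hN, h⟩ := hrel'
    rw [h]
    exact mulVec_mem_DSet hN q hq
  refine ⟨⟨A, H⟩, mem_reducedRoots.mpr ⟨⟨hA, by exact_mod_cast hAn⟩, hH,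
    (rootQuad_mem_DSet_iff hA hdvd').mp hmem⟩, ?_⟩
  exact hrel'.setOf_eq.symm

lemma injOn_rootClass {n : ℕ} (hn : 2 ≤ n) : Set.InjOn (rootClass n) (reducedRoots n) := by
  rintro ⟨A, H⟩ hx ⟨A', H'⟩ hx' heq
  have h : rootQuad n A' H' ∈ rootClass n ⟨A, H⟩ := by
    rw [heq]
    exact Ap₁Rel.refl _
  obtain ⟨⟨h1, h2⟩, h3, h4⟩ := mem_reducedRoots.mp hx
  obtain ⟨⟨h1', h2'⟩, h3', h4'⟩ := mem_reducedRoots.mp hx'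
  obtain ⟨rfl, rfl⟩ := eq_of_ap₁Rel_rootQuad hn h1 h2 h3 h4 h1' h2' h3' h4' h
  rfl

lemma MC_eq_of_mem_rootClass {n : ℕ} {x : Σ _ : ℕ, ℕ} (hx : x ∈ reducedRoots n)
    {q : Fin 4 → ℤ} (hq : q ∈ rootClass n x) : MC q = n - x.1 := by
  have hle : (x.1 : ℤ) ≤ n := by exact_mod_cast (mem_reducedRoots.mp hx).1.2
  have h1 : rootQuad n x.1 x.2 1 = x.1 - n := by simp [rootQuad]
  rw [MC_eq (isPacked_of_mem_DSet (Int.natCast_nonneg n) (rootQuad_mem_DSet hx)) (i := 1)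
    (by rw [h1]; linarith) hq, h1]
  push_cast
  ring

lemma ncard_ID₀ {n : ℕ} (hn : 2 ≤ n) :
    (ID₀ n).ncard = ∑ A ∈ Finset.Ioc 0 n, (halfRoots n A).card := by
  have : ID₀ n = rootClass n '' reducedRoots n := by
    ext O
    constructor
    · exact fun hO => exists_rootClass_eq (by omega) hO
    · rintro ⟨x, hx, rfl⟩
      exact rootClass_mem_ID₀ hx
  rw [this, (injOn_rootClass hn).ncard_image, Set.ncard_coe_finset, reducedRoots,
    Finset.card_sigma]

lemma ncard_ID₀_MC_le {n : ℕ} (hn : 2 ≤ n) (r : ℝ) :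
    {O ∈ ID₀ n | ∃ q ∈ O, MC q ≤ r}.ncard =
      ∑ A ∈ (Finset.Ioc 0 n).filter (fun A : ℕ => (n : ℝ) - A ≤ r), (halfRoots n A).card := by
  obtain ⟨T, hT⟩ : ∃ T : Finset (Σ _ : ℕ, ℕ), T =
    ((Finset.Ioc 0 n).filter fun A : ℕ => (n : ℝ) - A ≤ r).sigma fun A => halfRoots n A := ⟨_, rfl⟩
  have hmem : ∀ x, x ∈ T ↔ x ∈ reducedRoots n ∧ (n : ℝ) - x.1 ≤ r := by
    intro x
    rw [hT, reducedRoots, Finset.mem_sigma, Finset.mem_sigma, Finset.mem_filter]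
    tauto
  have : {O ∈ ID₀ n | ∃ q ∈ O, MC q ≤ r} = rootClass n '' T := by
    ext O
    constructor
    · rintro ⟨hO, q, hq, hMC⟩
      obtain ⟨x, hx, rfl⟩ := exists_rootClass_eq (by omega) hO
      rw [MC_eq_of_mem_rootClass hx hq] at hMC
      exact ⟨x, (hmem x).mpr ⟨hx, hMC⟩, rfl⟩
    · rintro ⟨x, hx, rfl⟩
      obtain ⟨hx, hr⟩ := (hmem x).mp hx
      exact ⟨rootClass_mem_ID₀ hx, _, .refl _, (MC_eq_of_mem_rootClass hx (.refl _)).trans_le hr⟩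
  rw [this, ((injOn_rootClass hn).mono fun x hx => ((hmem x).mp hx).1).ncard_image,
    Set.ncard_coe_finset, hT, Finset.card_sigma]

/-- As `n → ∞`, the heights `MC(q)/n` of the classes in `ID₀(n)` equidistribute
uniformly on `[0, 1]`: for fixed `s ∈ [0,1]`, the proportion of classes of
`ID₀(n)` with `MC(q) ≤ s·n` tends to `s`. -/
theorem apollonian_bottom_stair_heights_equidistribute
    (s : ℝ) (hs0 : 0 ≤ s) (hs1 : s ≤ 1) :
    Filter.Tendsto
      (fun n : ℕ =>
        (({O ∈ ID₀ (n : ℤ) | ∃ q ∈ O, MC q ≤ s * (n : ℝ)}).ncard : ℝ) /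
          ((ID₀ (n : ℤ)).ncard : ℝ))
      Filter.atTop (nhds s) := by
  refine (tendsto_sum_card_halfRoots_div s hs0 hs1).congr' ?_
  filter_upwards [Filter.eventually_ge_atTop 2] with n hn
  rw [ncard_ID₀ hn, ncard_ID₀_MC_le hn]
  push_cast
  rfl
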